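/- Let A be a complex Banach algebra that is biflat with constant K ≥ 1, and let m ≥ 0. Then for every cyclic (2m+2)-cocycle ψ ∈ Z^{2m+2}_λ(A) there exist a cyclic cochain χ ∈ C^{2m+1}_λ(A) and a trace τ ∈ A* (i.e. τ ∈ Z⁰_λ(A)) such that ψ = τ^(2m+2) + δχ, with ‖τ‖ ≤ K^{2m+2}‖ψ‖ and ‖χ‖ ≤ 2(m+1)³ K^{4m+2} ‖ψ‖. -/

import Mathlib

/-- `Coch A n` is `Cⁿ(A)`: the Banach space of bounded `(n+1)`-multilinear
functionals on `A`.  In particular `Coch A 1` is the space of bounded bilinear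
functionals on `A × A`, i.e. the dual of the projective tensor product `A ⊗̂ A`. -/
abbrev Coch (A : Type*) [NonUnitalNormedRing A] [NormedSpace ℂ A] (n : ℕ) :=
  ContinuousMultilinearMap ℂ (fun _ : Fin (n + 1) => A) ℂ

variable {A : Type*} [NonUnitalNormedRing A] [NormedSpace ℂ A]

/-- The `j`-th face `(a₀, …, aⱼaⱼ₊₁, …, a_{n+1})` of a tuple. -/
def hochFace {n : ℕ} (a : Fin (n + 2) → A) (j : Fin (n + 1)) : Fin (n + 1) → A :=
  fun i =>
    if (i : ℕ) < (j : ℕ) then a i.castSucc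
    else if (i : ℕ) = (j : ℕ) then a i.castSucc * a i.succ
    else a i.succ

/-- The truncated Hochschild coboundary `δ'`. -/
noncomputable def hochDelta' (n : ℕ) (φ : (Fin (n + 1) → A) → ℂ) :
    (Fin (n + 2) → A) → ℂ :=
  fun a => ∑ j : Fin (n + 1), (-1 : ℂ) ^ (j : ℕ) * φ (hochFace a j)

/-- The Hochschild coboundary `δ`. -/
noncomputable def hochDelta (n : ℕ) (φ : (Fin (n + 1) → A) → ℂ) :
    (Fin (n + 2) → A) → ℂ :=
  fun a => hochDelta' n φ a +
    (-1 : ℂ) ^ (n + 1) *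
      φ (fun i => if i = 0 then a (Fin.last (n + 1)) * a 0 else a i.castSucc)

/-- The signed cyclic shift `t`: `tψ(a₀,…,aₙ) = (−1)ⁿ ψ(aₙ,a₀,…,a_{n−1})`. -/
noncomputable def cycT (n : ℕ) (φ : (Fin (n + 1) → A) → ℂ) :
    (Fin (n + 1) → A) → ℂ :=
  fun a => (-1 : ℂ) ^ n * φ (fun i => a (i - 1))

/-- `A` is biflat with constant `K`: there is a bounded linear `A`-bimodule map
`ρ` from the bounded bilinear functionals on `A × A` to `A*`, of norm `≤ K`,
which is a left inverse to `π*`, where `π(a ⊗ b) = ab`. -/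
def IsBiflat (A : Type*) [NonUnitalNormedRing A] [NormedSpace ℂ A] (K : ℝ) : Prop :=
  ∃ ρ : Coch A 1 →L[ℂ] (A →L[ℂ] ℂ),
    ‖ρ‖ ≤ K ∧
    (∀ (f : A →L[ℂ] ℂ) (Ψ : Coch A 1),
      (∀ x y, Ψ ![x, y] = f (x * y)) → ρ Ψ = f) ∧
    (∀ (a : A) (Ψ Ψ' : Coch A 1),
      (∀ x y, Ψ' ![x, y] = Ψ ![x, y * a]) → ∀ x, ρ Ψ' x = ρ Ψ (x * a)) ∧
    (∀ (a : A) (Ψ Ψ' : Coch A 1),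
      (∀ x y, Ψ' ![x, y] = Ψ ![a * x, y]) → ∀ x, ρ Ψ' x = ρ Ψ (a * x))

/-- The ordered product `a₀a₁⋯aₙ` of a tuple of elements of `A`. -/
def ordProd : (n : ℕ) → (Fin (n + 1) → A) → A
  | 0, a => a 0
  | n + 1, a => ordProd n (fun i => a i.castSucc) * a (Fin.last (n + 1))

/-- The cochain `τ⁽ⁿ⁾(a₀,…,aₙ) = τ(a₀a₁⋯aₙ)` associated to `τ ∈ A*`. -/
noncomputable def trCochain (τ : A →L[ℂ] ℂ) (n : ℕ) : (Fin (n + 1) → A) → ℂ :=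
  fun a => τ (ordProd n a)


section helpers

set_option linter.unusedSectionVars false

open Function

/-- Rotation of a tuple. -/
def rotT {p : ℕ} (c : Fin (p + 1)) (a : Fin (p + 1) → A) : Fin (p + 1) → A :=
  fun k => a (k + c)

theorem rotT_rotT {p : ℕ} (c d : Fin (p + 1)) (a : Fin (p + 1) → A) :
    rotT c (rotT d a) = rotT (c + d) a := by
  funext k; simp [rotT, add_assoc]

theorem rotT_zero {p : ℕ} (a : Fin (p + 1) → A) : rotT 0 a = a := by
  funext k; simp [rotT]

/-- Rotation of a cochain. -/
noncomputable def rotC {p : ℕ} (c : Fin (p + 1)) (φ : Coch A p) : Coch A p :=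
  φ.domDomCongr (Equiv.addRight c)

theorem rotC_apply {p : ℕ} (c : Fin (p + 1)) (φ : Coch A p) (a : Fin (p + 1) → A) :
    rotC c φ a = φ (rotT c a) := rfl

theorem rotC_rotC {p : ℕ} (c d : Fin (p + 1)) (φ : Coch A p) :
    rotC c (rotC d φ) = rotC (c + d) φ := by
  ext a
  simp only [rotC_apply, rotT_rotT, add_comm]

theorem rotC_zero {p : ℕ} (φ : Coch A p) : rotC 0 φ = φ := by
  ext a
  simp only [rotC_apply, rotT_zero]

theorem norm_rotC_le {p : ℕ} (c : Fin (p + 1)) (φ : Coch A p) : ‖rotC c φ‖ ≤ ‖φ‖ := by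
  refine ContinuousMultilinearMap.opNorm_le_bound (norm_nonneg _) fun a => ?_
  rw [rotC_apply]
  refine (φ.le_opNorm _).trans (le_of_eq ?_)
  congr 1
  exact Equiv.prod_comp (Equiv.addRight c) (fun i => ‖a i‖)

theorem vec2_eta (v : Fin 2 → A) : ![v 0, v 1] = v := by
  funext i; fin_cases i <;> rfl

theorem coch_one_ext {Ψ Ψ' : Coch A 1} (h : ∀ x y, Ψ ![x, y] = Ψ' ![x, y]) : Ψ = Ψ' := by
  ext v
  rw [← vec2_eta v]; exact h _ _

/-- Product of norms off two indices. -/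
noncomputable def offProd {p : ℕ} (i j : Fin (p + 1)) (a : Fin (p + 1) → A) : ℝ :=
  ∏ k ∈ (Finset.univ.erase i).erase j, ‖a k‖

theorem offProd_nonneg {p : ℕ} (i j : Fin (p + 1)) (a : Fin (p + 1) → A) :
    0 ≤ offProd i j a := Finset.prod_nonneg fun _ _ => norm_nonneg _

theorem prod_off {p : ℕ} {i j : Fin (p + 1)} (h : i ≠ j) (a : Fin (p + 1) → A) :
    ∏ k, ‖a k‖ = ‖a i‖ * ‖a j‖ * offProd i j a := by
  rw [← Finset.mul_prod_erase Finset.univ _ (Finset.mem_univ i),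
    ← Finset.mul_prod_erase (Finset.univ.erase i) _ (Finset.mem_erase.2 ⟨h.symm, Finset.mem_univ j⟩),
    mul_assoc]
  rfl

theorem offProd_congr {p : ℕ} (i j : Fin (p + 1)) {a b : Fin (p + 1) → A}
    (h : ∀ k, k ≠ i → k ≠ j → a k = b k) : offProd i j a = offProd i j b := by
  refine Finset.prod_congr rfl fun k hk => ?_
  simp only [Finset.mem_erase] at hk
  rw [h k hk.2.1 hk.1]

/-- Put `x` at `i` and `y` at `j`. -/
def upd2 {p : ℕ} (i j : Fin (p + 1)) (a : Fin (p + 1) → A) (x y : A) : Fin (p + 1) → A :=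
  update (update a i x) j y

theorem upd2_congr {p : ℕ} (i j : Fin (p + 1)) {a b : Fin (p + 1) → A}
    (h : ∀ k, k ≠ i → k ≠ j → a k = b k) (x y : A) : upd2 i j a x y = upd2 i j b x y := by
  funext k
  by_cases hj : k = j
  · subst hj; simp [upd2]
  by_cases hi : k = i
  · subst hi; simp [upd2, hj]
  simp [upd2, hi, hj, h k hi hj]

theorem upd2_left {p : ℕ} {i j : Fin (p + 1)} (h : i ≠ j) (a : Fin (p + 1) → A) (x y : A) :
    upd2 i j a x y i = x := by simp [upd2, h]

theorem upd2_right {p : ℕ} (i j : Fin (p + 1)) (a : Fin (p + 1) → A) (x y : A) :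
    upd2 i j a x y j = y := by simp [upd2]

theorem upd2_off {p : ℕ} {i j k : Fin (p + 1)} (hi : k ≠ i) (hj : k ≠ j)
    (a : Fin (p + 1) → A) (x y : A) :
    upd2 i j a x y k = a k := by simp [upd2, hi, hj]

theorem upd2_update {p : ℕ} {i j k : Fin (p + 1)} (hi : k ≠ i) (hj : k ≠ j)
    (a : Fin (p + 1) → A) (x y u : A) :
    upd2 i j (update a k u) x y = update (upd2 i j a x y) k u := by
  rw [upd2, upd2, update_comm hi, update_comm hj]

/-- The bilinear form obtained by freeing the slots `i ≠ j`. -/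
noncomputable def slot2 {p : ℕ} (φ : Coch A p) (i j : Fin (p + 1)) (h : i ≠ j)
    (a : Fin (p + 1) → A) : Coch A 1 where
  toFun v := φ (upd2 i j a (v 0) (v 1))
  map_update_add' := by
    intro inst v k x y
    have : inst = instDecidableEqFin 2 := Subsingleton.elim _ _
    subst this
    fin_cases k
    · simp [upd2, update_comm h]
    · simp [upd2]
  map_update_smul' := by
    intro inst v k c x
    have : inst = instDecidableEqFin 2 := Subsingleton.elim _ _
    subst this
    fin_cases k
    · simp [upd2, update_comm h]
    · simp [upd2]
  cont := by
    refine φ.cont.comp ?_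
    unfold upd2
    fun_prop

theorem slot2_apply {p : ℕ} (φ : Coch A p) {i j : Fin (p + 1)} (h : i ≠ j)
    (a : Fin (p + 1) → A) (v : Fin 2 → A) :
    slot2 φ i j h a v = φ (upd2 i j a (v 0) (v 1)) := rfl

theorem slot2_vec {p : ℕ} (φ : Coch A p) {i j : Fin (p + 1)} (h : i ≠ j)
    (a : Fin (p + 1) → A) (x y : A) :
    slot2 φ i j h a ![x, y] = φ (upd2 i j a x y) := rfl

theorem slot2_congr {p : ℕ} (φ : Coch A p) {i j : Fin (p + 1)} (h : i ≠ j)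
    {a b : Fin (p + 1) → A}
    (hab : ∀ k, k ≠ i → k ≠ j → a k = b k) : slot2 φ i j h a = slot2 φ i j h b := by
  ext v; simp only [slot2_apply]; rw [upd2_congr i j hab]

theorem norm_slot2_le {p : ℕ} (φ : Coch A p) {i j : Fin (p + 1)} (h : i ≠ j)
    (a : Fin (p + 1) → A) : ‖slot2 φ i j h a‖ ≤ ‖φ‖ * offProd i j a := by
  refine ContinuousMultilinearMap.opNorm_le_bound
    (mul_nonneg (norm_nonneg _) (offProd_nonneg _ _ _)) fun v => ?_
  rw [slot2_apply]
  refine (φ.le_opNorm _).trans (le_of_eq ?_)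
  rw [prod_off h, upd2_left h, upd2_right, Fin.prod_univ_two,
    offProd_congr i j (b := a) (fun k hi hj => upd2_off hi hj _ _ _)]
  ring

theorem slot2_update_add {p : ℕ} (φ : Coch A p) {i j k : Fin (p + 1)} (h : i ≠ j)
    (hi : k ≠ i) (hj : k ≠ j) (a : Fin (p + 1) → A) (x y : A) :
    slot2 φ i j h (update a k (x + y)) =
      slot2 φ i j h (update a k x) + slot2 φ i j h (update a k y) := by
  ext v
  simp [slot2_apply, upd2_update hi hj]

theorem slot2_update_smul {p : ℕ} (φ : Coch A p) {i j k : Fin (p + 1)} (h : i ≠ j)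
    (hi : k ≠ i) (hj : k ≠ j) (a : Fin (p + 1) → A) (c : ℂ) (x : A) :
    slot2 φ i j h (update a k (c • x)) = c • slot2 φ i j h (update a k x) := by
  ext v
  simp [slot2_apply, upd2_update hi hj]

theorem slot2_update_self {p : ℕ} (φ : Coch A p) {i j k : Fin (p + 1)} (h : i ≠ j)
    (hk : k = i ∨ k = j) (a : Fin (p + 1) → A) (x : A) :
    slot2 φ i j h (update a k x) = slot2 φ i j h a := by
  refine slot2_congr φ h fun l hi hj => ?_
  rcases hk with rfl | rfl
  · simp [hi]
  · simp [hj]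

theorem slot2_add {p : ℕ} (φ φ' : Coch A p) {i j : Fin (p + 1)} (h : i ≠ j)
    (a : Fin (p + 1) → A) :
    slot2 (φ + φ') i j h a = slot2 φ i j h a + slot2 φ' i j h a := by
  ext v; simp [slot2_apply]

theorem slot2_smul {p : ℕ} (c : ℂ) (φ : Coch A p) {i j : Fin (p + 1)} (h : i ≠ j)
    (a : Fin (p + 1) → A) :
    slot2 (c • φ) i j h a = c • slot2 φ i j h a := by
  ext v; simp [slot2_apply]

theorem succ_ne_self' {q : ℕ} (j : Fin (q + 2)) : j ≠ j + 1 := by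
  intro h
  have : (1 : Fin (q + 2)) = 0 := by
    have := congrArg (fun x => x - j) h
    simpa using this.symm
  simp at this

variable [IsScalarTower ℂ A A] [SMulCommClass ℂ A A]

theorem RR_bound (ρ : Coch A 1 →L[ℂ] (A →L[ℂ] ℂ)) {q : ℕ} (j : Fin (q + 2))
    (φ : Coch A (q + 1)) (a : Fin (q + 2) → A) :
    ‖ρ (slot2 φ j (j + 1) (succ_ne_self' j) a) (a j * a (j + 1))‖ ≤ ‖ρ‖ * ‖φ‖ * ∏ i, ‖a i‖ := by
  have hne := succ_ne_self' j
  have h1 := (ρ (slot2 φ j (j + 1) hne a)).le_opNorm (a j * a (j + 1))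
  have h2 := ρ.le_opNorm (slot2 φ j (j + 1) hne a)
  have h3 := norm_slot2_le φ hne a
  have h4 := norm_mul_le (a j) (a (j + 1))
  rw [prod_off hne]
  calc _ ≤ _ := h1
    _ ≤ (‖ρ‖ * (‖φ‖ * offProd j (j + 1) a)) * (‖a j‖ * ‖a (j + 1)‖) := by
      refine mul_le_mul (h2.trans (by gcongr)) h4 (norm_nonneg _) (mul_nonneg ρ.opNorm_nonneg
        (mul_nonneg (norm_nonneg _) (offProd_nonneg _ _ _)))
    _ = _ := by ring

/-- `R_j φ (a) = ρ((x,y) ↦ φ(a[j:=x, j+1:=y]))(a_j a_{j+1})`. -/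
noncomputable def RR (ρ : Coch A 1 →L[ℂ] (A →L[ℂ] ℂ)) {q : ℕ} (j : Fin (q + 2)) :
    Coch A (q + 1) →ₗ[ℂ] Coch A (q + 1) where
  toFun φ := MultilinearMap.mkContinuous
    { toFun := fun a => ρ (slot2 φ j (j + 1) (succ_ne_self' j) a) (a j * a (j + 1))
      map_update_add' := by
        intro inst a k x y
        have : inst = instDecidableEqFin _ := Subsingleton.elim _ _
        subst this
        have hne := succ_ne_self' j
        by_cases h1 : k = j
        · subst h1
          simp only [slot2_update_self φ hne (Or.inl rfl), update_self, update_of_ne hne.symm,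
            add_mul, map_add]
        by_cases h2 : k = j + 1
        · subst h2
          simp only [slot2_update_self φ hne (Or.inr rfl), update_self, update_of_ne hne,
            mul_add, map_add]
        simp only [slot2_update_add φ hne h1 h2, update_of_ne (Ne.symm h1),
          update_of_ne (Ne.symm h2), map_add, _root_.add_apply]
      map_update_smul' := by
        intro inst a k c x
        have : inst = instDecidableEqFin _ := Subsingleton.elim _ _
        subst this
        have hne := succ_ne_self' j
        by_cases h1 : k = j
        · subst h1
          simp only [slot2_update_self φ hne (Or.inl rfl), update_self, update_of_ne hne.symm,
            smul_mul_assoc, map_smul]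
        by_cases h2 : k = j + 1
        · subst h2
          simp only [slot2_update_self φ hne (Or.inr rfl), update_self, update_of_ne hne,
            mul_smul_comm, map_smul]
        simp only [slot2_update_smul φ hne h1 h2, update_of_ne (Ne.symm h1),
          update_of_ne (Ne.symm h2), map_smul, _root_.smul_apply] }
    (‖ρ‖ * ‖φ‖) (fun a => RR_bound ρ j φ a)
  map_add' φ φ' := by
    ext a
    simp [slot2_add]
  map_smul' c φ := by
    ext a
    simp [slot2_smul]

theorem RR_apply (ρ : Coch A 1 →L[ℂ] (A →L[ℂ] ℂ)) {q : ℕ} (j : Fin (q + 2))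
    (φ : Coch A (q + 1)) (a : Fin (q + 2) → A) :
    RR ρ j φ a = ρ (slot2 φ j (j + 1) (succ_ne_self' j) a) (a j * a (j + 1)) := rfl

theorem norm_RR_le (ρ : Coch A 1 →L[ℂ] (A →L[ℂ] ℂ)) {q : ℕ} (j : Fin (q + 2))
    (φ : Coch A (q + 1)) : ‖RR ρ j φ‖ ≤ ‖ρ‖ * ‖φ‖ :=
  ContinuousMultilinearMap.opNorm_le_bound (mul_nonneg ρ.opNorm_nonneg (norm_nonneg _))
    fun a => RR_bound ρ j φ a

/-- `sφ(a) = ρ((x,y) ↦ φ(x,y,a₁,…))(a₀)`. -/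
noncomputable def ss (ρ : Coch A 1 →L[ℂ] (A →L[ℂ] ℂ)) {q : ℕ} (φ : Coch A (q + 1)) :
    Coch A q :=
  MultilinearMap.mkContinuous
    { toFun := fun a => ρ (slot2 φ 0 1 (by simp) (Fin.cons 0 a : Fin (q + 2) → A)) (a 0)
      map_update_add' := by
        intro inst a k x y
        have : inst = instDecidableEqFin _ := Subsingleton.elim _ _
        subst this
        by_cases h1 : k = 0
        · subst h1
          simp only [Fin.cons_update, slot2_update_self φ (k := Fin.succ 0) (i := 0) (j := 1)
            (by simp) (Or.inr rfl), update_self, map_add]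
        have h2 : k.succ ≠ 1 := by
          intro h; apply h1; exact Fin.succ_injective _ h
        simp only [Fin.cons_update, slot2_update_add φ (k := k.succ) (i := 0) (j := 1)
            (by simp) (Fin.succ_ne_zero k) h2, update_of_ne (Ne.symm h1), map_add,
            _root_.add_apply]
      map_update_smul' := by
        intro inst a k c x
        have : inst = instDecidableEqFin _ := Subsingleton.elim _ _
        subst this
        by_cases h1 : k = 0
        · subst h1
          simp only [Fin.cons_update, slot2_update_self φ (k := Fin.succ 0) (i := 0) (j := 1)
            (by simp) (Or.inr rfl), update_self, map_smul]
        have h2 : k.succ ≠ 1 := by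
          intro h; apply h1; exact Fin.succ_injective _ h
        simp only [Fin.cons_update, slot2_update_smul φ (k := k.succ) (i := 0) (j := 1)
            (by simp) (Fin.succ_ne_zero k) h2, update_of_ne (Ne.symm h1), map_smul,
            _root_.smul_apply] }
    (‖ρ‖ * ‖φ‖) (by
      intro a
      have hne : (0 : Fin (q + 2)) ≠ 1 := by simp
      have h1 := (ρ (slot2 φ 0 1 hne (Fin.cons 0 a : Fin (q + 2) → A))).le_opNorm (a 0)
      have h2 := ρ.le_opNorm (slot2 φ 0 1 hne (Fin.cons 0 a : Fin (q + 2) → A))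
      have h3 := norm_slot2_le φ hne (Fin.cons 0 a : Fin (q + 2) → A)
      have h5 : ∏ i, ‖a i‖ = ‖a 0‖ * offProd 0 1 (Fin.cons 0 a : Fin (q + 2) → A) := by
        rw [Fin.prod_univ_succ]
        congr 1
        unfold offProd
        have : ((Finset.univ : Finset (Fin (q + 2))).erase 0).erase 1 =
            Finset.univ.map ((Fin.succEmb q).trans (Fin.succEmb (q + 1))) := by
          ext k
          simp only [Finset.mem_erase, Finset.mem_univ, and_true, Finset.mem_map, true_and,
            Fin.ext_iff, ne_eq]
          constructor
          · rintro ⟨h1, h0⟩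
            have h1' : (k : ℕ) ≠ 1 := by simpa using h1
            have h0' : (k : ℕ) ≠ 0 := by simpa using h0
            refine ⟨⟨k - 2, by omega⟩, ?_⟩
            simp
            omega
          · rintro ⟨l, hl⟩
            have hl' : (l : ℕ) + 1 + 1 = k := by simpa using hl
            constructor
            · rw [← hl']; simp
            · rw [← hl']; simp
        rw [this, Finset.prod_map]
        simp
      rw [h5]
      simp only [MultilinearMap.coe_mk]
      calc _ ≤ _ := h1
        _ ≤ (‖ρ‖ * (‖φ‖ * offProd 0 1 (Fin.cons 0 a : Fin (q + 2) → A))) * ‖a 0‖ := by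
          refine mul_le_mul (h2.trans (by gcongr)) ?_ (norm_nonneg _) (mul_nonneg ρ.opNorm_nonneg
            (mul_nonneg (norm_nonneg _) (offProd_nonneg _ _ _)))
          exact le_rfl
        _ = _ := by ring)

theorem ss_apply (ρ : Coch A 1 →L[ℂ] (A →L[ℂ] ℂ)) {q : ℕ} (φ : Coch A (q + 1))
    (a : Fin (q + 1) → A) :
    ss ρ φ a = ρ (slot2 φ 0 1 (by simp) (Fin.cons 0 a : Fin (q + 2) → A)) (a 0) := rfl

theorem norm_ss_le (ρ : Coch A 1 →L[ℂ] (A →L[ℂ] ℂ)) {q : ℕ} (φ : Coch A (q + 1)) :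
    ‖ss ρ φ‖ ≤ ‖ρ‖ * ‖φ‖ :=
  MultilinearMap.mkContinuous_norm_le _ (by positivity) _


end helpers


section helpers2

set_option linter.unusedSectionVars false
set_option linter.unusedSimpArgs false

open Function

theorem fin_add_val {p : ℕ} (i j : Fin (p + 1)) :
    ((i + j : Fin (p + 1)) : ℕ) =
      if (i : ℕ) + j < p + 1 then (i : ℕ) + j else (i : ℕ) + j - (p + 1) := by
  rw [Fin.val_add]
  split_ifs with h
  · exact Nat.mod_eq_of_lt h
  · rw [Nat.mod_eq_sub_mod (by omega), Nat.mod_eq_of_lt (by omega)]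

theorem hochFace_zero {q : ℕ} (a : Fin (q + 2) → A) (k : Fin (q + 1)) :
    hochFace a 0 k = if (k : ℕ) = 0 then a k.castSucc * a k.succ else a k.succ := by
  have : ((0 : Fin (q + 1)) : ℕ) = 0 := rfl
  unfold hochFace
  by_cases h : (k : ℕ) = 0
  · rw [if_neg (by omega), if_pos (by omega), if_pos h]
  · rw [if_neg (by omega), if_neg (by omega), if_neg h]

theorem face_rot {q : ℕ} (a : Fin (q + 2) → A) (i : Fin (q + 1)) :
    rotT i (hochFace a i) = hochFace (rotT i.castSucc a) 0 := by
  funext k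
  have h1 := fin_add_val k i
  have e1 := fin_add_val k.castSucc i.castSucc
  have e2 := fin_add_val k.succ i.castSucc
  simp only [Fin.val_castSucc, Fin.val_succ] at e1 e2
  have c1 : ((k + i : Fin (q + 1)).castSucc : ℕ) = ((k + i : Fin (q + 1)) : ℕ) := rfl
  have c2 : ((k + i : Fin (q + 1)).succ : ℕ) = ((k + i : Fin (q + 1)) : ℕ) + 1 := rfl
  have hk := k.2
  have hi := i.2
  rw [hochFace_zero]
  simp only [rotT, hochFace]
  by_cases hk0 : (k : ℕ) = 0
  · rw [if_neg (by split_ifs at h1 <;> omega), if_pos (by split_ifs at h1 <;> omega), if_pos hk0]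
    congr 2 <;> apply Fin.ext
    · split_ifs at h1 e1 <;> omega
    · split_ifs at h1 e2 <;> omega
  · rw [if_neg hk0]
    by_cases hlt : ((k + i : Fin (q + 1)) : ℕ) < i
    · rw [if_pos hlt]
      congr 1; apply Fin.ext
      split_ifs at h1 e2 <;> omega
    · rw [if_neg hlt, if_neg (by split_ifs at h1 <;> omega)]
      congr 1; apply Fin.ext
      split_ifs at h1 e2 <;> omega

/-- The last (wrap-around) face. -/
def lastFace {q : ℕ} (a : Fin (q + 2) → A) : Fin (q + 1) → A :=
  fun i => if i = 0 then a (Fin.last (q + 1)) * a 0 else a i.castSucc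

theorem lastFace_eq {q : ℕ} (a : Fin (q + 2) → A) :
    lastFace a = hochFace (rotT (Fin.last (q + 1)) a) 0 := by
  funext k
  have e1 := fin_add_val k.castSucc (Fin.last (q + 1))
  have e2 := fin_add_val k.succ (Fin.last (q + 1))
  simp only [Fin.val_castSucc, Fin.val_succ, Fin.val_last] at e1 e2
  have hk := k.2
  rw [hochFace_zero]
  simp only [lastFace, rotT]
  by_cases hk0 : k = 0
  · subst hk0
    simp only [Fin.val_zero] at e1 e2
    rw [if_pos rfl, if_pos (by rfl)]
    congr 2 <;> apply Fin.ext
    · rw [e1]; simp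
    · rw [e2]; simp; omega
  · have hk1 : (k : ℕ) ≠ 0 := fun h => hk0 (Fin.ext h)
    rw [if_neg hk0, if_neg hk1]
    congr 1; apply Fin.ext
    rw [e2]; split_ifs
    · omega
    · simp only [Fin.val_castSucc]; omega

theorem ordProd_face {q : ℕ} (a : Fin (q + 2) → A) (j : Fin (q + 1)) :
    ordProd q (hochFace a j) = ordProd (q + 1) a := by
  induction q with
  | zero =>
    have : j = 0 := Fin.fin_one_eq_zero j
    subst this
    simp [ordProd, hochFace]
  | succ q ih =>
    refine Fin.lastCases ?_ (fun j => ?_) j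
    · simp only [ordProd]
      have h1 : (fun i : Fin (q + 1) => hochFace a (Fin.last (q + 1)) i.castSucc) =
          fun i => a i.castSucc.castSucc := by
        funext i
        have := i.2
        simp only [hochFace, Fin.val_castSucc, Fin.val_last]
        rw [if_pos (by omega)]
      rw [h1]
      simp [hochFace, mul_assoc]
    · have h1 : (fun i : Fin (q + 1) => hochFace a j.castSucc i.castSucc) =
          hochFace (fun i => a i.castSucc) j := by
        funext i
        simp only [hochFace, Fin.val_castSucc]
        rfl
      have h2 : hochFace a j.castSucc (Fin.last (q + 1)) = a (Fin.last (q + 2)) := by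
        have := j.2
        simp only [hochFace, Fin.val_castSucc, Fin.val_last]
        rw [if_neg (by omega), if_neg (by omega)]
        rfl
      rw [ordProd, h1, h2, ih]
      rfl

theorem rot_face_zero {q : ℕ} (a : Fin (q + 2) → A) (c : Fin (q + 1)) (hc : c ≠ 0) :
    rotT c (hochFace a 0) = hochFace (rotT c.succ a) (-c) := by
  have hv : (c : ℕ) ≠ 0 := fun h => hc (Fin.ext h)
  have hn : ((-c : Fin (q + 1)) : ℕ) = q + 1 - c := by
    rw [Fin.val_neg]; simp [hc]
  have h := face_rot (rotT c.succ a) (-c)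
  rw [rotT_rotT] at h
  have h0 : (-c : Fin (q + 1)).castSucc + c.succ = 0 := by
    apply Fin.ext
    rw [fin_add_val]
    simp only [Fin.val_castSucc, Fin.val_succ, Fin.val_zero, hn]
    have := c.2
    rw [if_neg (by omega)]; omega
  rw [h0, rotT_zero] at h
  rw [← h, rotT_rotT, add_neg_cancel, rotT_zero]


theorem ordProd_rot_face {q : ℕ} (a : Fin (q + 2) → A) (c : Fin (q + 1)) (hc : c ≠ 0) :
    ordProd q (rotT c (hochFace a 0)) = ordProd (q + 1) (rotT c.succ a) := by
  rw [rot_face_zero a c hc, ordProd_face]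

theorem ordProd_cons {q : ℕ} (a : Fin (q + 2) → A) :
    ordProd (q + 1) a = a 0 * ordProd q (fun i => a i.succ) := by
  induction q with
  | zero => simp [ordProd]
  | succ q ih =>
    rw [ordProd, ih, ordProd, mul_assoc]
    rfl

theorem ordProd_rot_one {q : ℕ} (a : Fin (q + 2) → A) :
    ordProd (q + 1) (rotT 1 a) = ordProd q (fun i => a i.succ) * a 0 := by
  rw [ordProd]
  congr 1
  · congr 1
    funext i
    simp [rotT]
  · simp [rotT]

theorem sgn_add {q : ℕ} (hq : Odd q) (i j : Fin (q + 1)) :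
    (-1 : ℂ) ^ ((i + j : Fin (q + 1)) : ℕ) = (-1) ^ (i : ℕ) * (-1) ^ (j : ℕ) := by
  rw [fin_add_val, ← pow_add]
  split_ifs with h
  · rfl
  · have he : Even (q + 1) := hq.add_one
    have : (i : ℕ) + j = ((i : ℕ) + j - (q + 1)) + (q + 1) := by omega
    conv_rhs => rw [this, pow_add, he.neg_one_pow, mul_one]

theorem sgn_neg {q : ℕ} (hq : Odd q) (i : Fin (q + 1)) :
    (-1 : ℂ) ^ ((-i : Fin (q + 1)) : ℕ) = (-1) ^ (i : ℕ) := by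
  have h := sgn_add hq (-i) i
  rw [neg_add_cancel] at h
  have h2 : ((-1 : ℂ) ^ (i : ℕ)) * (-1) ^ (i : ℕ) = 1 := by
    rw [← mul_pow]; simp
  simp only [Fin.val_zero, pow_zero] at h
  calc _ = (-1 : ℂ) ^ ((-i : Fin (q + 1)) : ℕ) * (((-1 : ℂ) ^ (i : ℕ)) * (-1) ^ (i : ℕ)) := by
        rw [h2, mul_one]
    _ = _ := by rw [← mul_assoc, ← h, one_mul]

theorem hochDelta_eq {q : ℕ} (φ : (Fin (q + 1) → A) → ℂ) (a : Fin (q + 2) → A) :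
    hochDelta q φ a = ∑ j : Fin (q + 1), (-1 : ℂ) ^ (j : ℕ) * φ (hochFace a j) +
      (-1 : ℂ) ^ (q + 1) * φ (lastFace a) := rfl

/-- All faces. -/
def allFace {q : ℕ} (a : Fin (q + 2) → A) (j : ℕ) : Fin (q + 1) → A :=
  if h : j < q + 1 then hochFace a ⟨j, h⟩ else lastFace a

theorem hochDelta_eq_range {q : ℕ} (φ : (Fin (q + 1) → A) → ℂ) (a : Fin (q + 2) → A) :
    hochDelta q φ a = ∑ j ∈ Finset.range (q + 2), (-1 : ℂ) ^ j * φ (allFace a j) := by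
  rw [hochDelta_eq, Finset.sum_range_succ, Finset.sum_range]
  congr 1
  · refine Finset.sum_congr rfl fun j _ => ?_
    rw [allFace, dif_pos j.2]
  · rw [allFace, dif_neg (by omega)]

theorem allFace_apply {q : ℕ} (a : Fin (q + 2) → A) (j : ℕ) (k : Fin (q + 1)) :
    allFace a j k = if j < q + 1 then
      (if (k : ℕ) < j then a k.castSucc
        else if (k : ℕ) = j then a k.castSucc * a k.succ else a k.succ)
      else (if (k : ℕ) = 0 then a (Fin.last (q + 1)) * a 0 else a k.castSucc) := by
  unfold allFace
  by_cases h : j < q + 1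
  · rw [dif_pos h, if_pos h]; rfl
  · rw [dif_neg h, if_neg h, lastFace]
    by_cases hk : k = 0
    · rw [if_pos hk, if_pos (by rw [hk]; rfl)]
    · rw [if_neg hk, if_neg (fun h : (k : ℕ) = 0 => hk (Fin.ext h))]

/-- Extension of a tuple to the naturals. -/
def extT {p : ℕ} (a : Fin (p + 1) → A) (j : ℕ) : A := a ⟨j % (p + 1), Nat.mod_lt _ (by omega)⟩

theorem allFace_comm {q : ℕ} (a : Fin (q + 3) → A) (i j : ℕ) (hij : i ≤ j) (hj : j < q + 2) :
    allFace (allFace a i) j = allFace (allFace a (j + 1)) i := by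
  have hext : ∀ (k : Fin (q + 3)), a k = extT a k := by
    intro k
    unfold extT
    congr 1; apply Fin.ext; exact (Nat.mod_eq_of_lt k.2).symm
  funext k
  have hk := k.2
  simp only [allFace_apply, Fin.val_castSucc, Fin.val_succ, Fin.val_last, Fin.val_zero, hext]
  rcases Nat.lt_or_ge j (q + 1) with h1 | h1
  · rcases lt_trichotomy (k : ℕ) i with h2 | h2 | h2
    · simp (disch := omega) only [if_pos, if_neg]
    · rcases eq_or_lt_of_le hij with h3 | h3
      · simp (disch := omega) only [if_pos, if_neg, mul_assoc]
      · simp (disch := omega) only [if_pos, if_neg]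
    · rcases lt_trichotomy (k : ℕ) j with h3 | h3 | h3 <;>
      simp (disch := omega) only [if_pos, if_neg]
  · obtain rfl : j = q + 1 := by omega
    rcases Nat.eq_zero_or_pos (k : ℕ) with h2 | h2
    · rcases Nat.eq_zero_or_pos i with h3 | h3
      · simp (disch := omega) only [if_pos, if_neg, mul_assoc, h2, if_true]
      · rcases Nat.lt_or_ge i (q + 1) with h4 | h4
        · simp (disch := omega) only [if_pos, if_neg, mul_assoc, h2]
        · simp (disch := omega) only [if_pos, if_neg, mul_assoc, h2]
    · rcases lt_trichotomy (k : ℕ) i with h3 | h3 | h3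
      · rcases Nat.lt_or_ge i (q + 1) with h4 | h4
        · simp (disch := omega) only [if_pos, if_neg]
        · simp (disch := omega) only [if_pos, if_neg]
      · simp (disch := omega) only [if_pos, if_neg]
      · simp (disch := omega) only [if_pos, if_neg]

theorem sum_alt_zero (n : ℕ) (f : ℕ → ℕ → ℂ)
    (hf : ∀ i j, i ≤ j → j < n → f i j = f (j + 1) i) :
    ∑ i ∈ Finset.range (n + 1), ∑ j ∈ Finset.range n, (-1 : ℂ) ^ i * ((-1) ^ j * f i j) = 0 := by
  rw [← Finset.sum_product']
  refine Finset.sum_involution (fun x _ => if x.1 ≤ x.2 then (x.2 + 1, x.1) else (x.2, x.1 - 1))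
    ?_ ?_ ?_ ?_
  · rintro ⟨i, j⟩ hx
    simp only [Finset.mem_product, Finset.mem_range] at hx
    simp only
    split_ifs with h
    · simp only
      rw [hf i j h hx.2]; ring
    · simp only
      have h2 := hf j (i - 1) (by omega) (by omega)
      rw [show i - 1 + 1 = i by omega] at h2
      rw [h2]
      obtain ⟨i', rfl⟩ : ∃ i', i = i' + 1 := ⟨i - 1, by omega⟩
      simp only [Nat.add_sub_cancel]
      ring
  · rintro ⟨i, j⟩ hx _ heq
    simp only at heq
    split_ifs at heq with h <;> simp only [Prod.mk.injEq] at heq <;> omega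
  · rintro ⟨i, j⟩ hx
    simp only [Finset.mem_product, Finset.mem_range] at hx ⊢
    split_ifs with h <;> simp only <;> omega
  · rintro ⟨i, j⟩ hx
    simp only
    split_ifs with h h2 h2 <;> simp only [Prod.mk.injEq] at * <;>
      first | omega | exact ⟨trivial, by omega⟩ | exact ⟨by omega, trivial⟩

theorem hochDelta_hochDelta {q : ℕ} (φ : (Fin (q + 1) → A) → ℂ) :
    hochDelta (q + 1) (hochDelta q φ) = 0 := by
  funext a
  rw [hochDelta_eq_range]
  simp only [hochDelta_eq_range, Finset.mul_sum, Pi.zero_apply]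
  refine sum_alt_zero (q + 2) (fun i j => φ (allFace (allFace a i) j)) fun i j hij hj => ?_
  rw [allFace_comm a i j hij hj]

end helpers2


section helpers3

set_option linter.unusedSectionVars false
set_option linter.unusedSimpArgs false

open Function

theorem face_update_zero {q : ℕ} (a : Fin (q + 2) → A) (u : A) :
    hochFace (update a 0 u) 0 = update (hochFace a 0) 0 (u * a 1) := by
  funext k
  rw [hochFace_zero]
  refine Fin.cases ?_ (fun l => ?_) k
  · simp
  · have : ((Fin.succ l : Fin (q + 1)) : ℕ) ≠ 0 := by simp
    have hq : (l.succ : Fin (q + 1)) ≠ 0 := Fin.succ_ne_zero l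
    rw [if_neg this, update_of_ne (Fin.succ_ne_zero _), update_of_ne hq, hochFace_zero, if_neg this]

theorem face_update_succ {q : ℕ} (a : Fin (q + 2) → A) (l : Fin (q + 1)) (u : A) :
    hochFace (update a l.succ u) 0 =
      update (hochFace a 0) l (if l = 0 then a 0 * u else u) := by
  funext k
  rw [hochFace_zero]
  by_cases hk : (k : ℕ) = 0
  · obtain rfl : k = 0 := Fin.ext hk
    rw [if_pos hk]
    by_cases hl : l = 0
    · subst hl
      rw [update_self, if_pos rfl, update_self, update_of_ne]
      · rfl
      · exact fun h => Fin.succ_ne_zero _ h.symm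
    · rw [update_of_ne (Ne.symm hl), hochFace_zero, if_pos hk, update_of_ne, update_of_ne]
      · intro h; exact hl (Fin.succ_injective _ h).symm
      · exact fun h => Fin.succ_ne_zero _ h.symm
  · rw [if_neg hk]
    by_cases hl : k = l
    · subst hl
      have : k ≠ 0 := fun h => hk (by rw [h]; rfl)
      rw [update_self, update_self, if_neg this]
    · rw [update_of_ne hl, hochFace_zero, if_neg hk, update_of_ne]
      intro h; exact hl (Fin.succ_injective _ h)

variable [IsScalarTower ℂ A A] [SMulCommClass ℂ A A]

/-- `y ∘ face₀`. -/
noncomputable def faceC {q : ℕ} (y : Coch A q) : Coch A (q + 1) where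
  toFun a := y (hochFace a 0)
  map_update_add' := by
    intro inst a k u v
    have : inst = instDecidableEqFin _ := Subsingleton.elim _ _
    subst this
    refine Fin.cases ?_ (fun l => ?_) k
    · simp only [face_update_zero, add_mul, y.map_update_add]
    · simp only [face_update_succ]
      split_ifs <;> simp only [mul_add, y.map_update_add]
  map_update_smul' := by
    intro inst a k c v
    have : inst = instDecidableEqFin _ := Subsingleton.elim _ _
    subst this
    refine Fin.cases ?_ (fun l => ?_) k
    · simp only [face_update_zero, smul_mul_assoc, y.map_update_smul]
    · simp only [face_update_succ]
      split_ifs <;> simp only [mul_smul_comm, y.map_update_smul]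
  cont := by
    refine y.cont.comp ?_
    refine continuous_pi fun k => ?_
    simp only [hochFace_zero]
    split_ifs <;> fun_prop

theorem faceC_apply {q : ℕ} (y : Coch A q) (a : Fin (q + 2) → A) :
    faceC y a = y (hochFace a 0) := rfl

/-- Right multiplication on the second slot. -/
noncomputable def actR (Φ : Coch A 1) (a : A) : Coch A 1 :=
  Φ.compContinuousLinearMap
    ![ContinuousLinearMap.id ℂ A, (ContinuousLinearMap.mul ℂ A).flip a]

theorem actR_vec (Φ : Coch A 1) (a x y : A) : actR Φ a ![x, y] = Φ ![x, y * a] := by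
  unfold actR
  rw [ContinuousMultilinearMap.compContinuousLinearMap_apply]
  congr 1
  funext i; fin_cases i <;> simp

/-- Left multiplication on the first slot. -/
noncomputable def actL (Φ : Coch A 1) (a : A) : Coch A 1 :=
  Φ.compContinuousLinearMap
    ![ContinuousLinearMap.mul ℂ A a, ContinuousLinearMap.id ℂ A]

theorem actL_vec (Φ : Coch A 1) (a x y : A) : actL Φ a ![x, y] = Φ ![a * x, y] := by
  unfold actL
  rw [ContinuousMultilinearMap.compContinuousLinearMap_apply]
  congr 1
  funext i; fin_cases i <;> simp

/-- The evaluation of a cochain in slot 0. -/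
noncomputable def evalZ {q : ℕ} (z : Coch A q) (a : Fin (q + 1) → A) : A →L[ℂ] ℂ :=
  z.toContinuousLinearMap a 0

theorem evalZ_apply {q : ℕ} (z : Coch A q) (a : Fin (q + 1) → A) (x : A) :
    evalZ z a x = z (update a 0 x) := rfl

/-- The properties of a biflatness splitting. -/
structure IsSplit (ρ : Coch A 1 →L[ℂ] (A →L[ℂ] ℂ)) : Prop where
  pi : ∀ (f : A →L[ℂ] ℂ) (Ψ : Coch A 1), (∀ x y, Ψ ![x, y] = f (x * y)) → ρ Ψ = f
  r : ∀ (a : A) (Ψ Ψ' : Coch A 1),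
      (∀ x y, Ψ' ![x, y] = Ψ ![x, y * a]) → ∀ x, ρ Ψ' x = ρ Ψ (x * a)
  l : ∀ (a : A) (Ψ Ψ' : Coch A 1),
      (∀ x y, Ψ' ![x, y] = Ψ ![a * x, y]) → ∀ x, ρ Ψ' x = ρ Ψ (a * x)

theorem upd2_cons {q : ℕ} (b : Fin (q + 1) → A) (x y u : A) :
    upd2 0 1 (Fin.cons u b : Fin (q + 2) → A) x y = (Fin.cons x (update b 0 y) : Fin (q + 2) → A) := by
  unfold upd2
  have h : (1 : Fin (q + 2)) = Fin.succ 0 := rfl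
  rw [Fin.update_cons_zero, h, ← Fin.cons_update]

theorem face_cons {q : ℕ} (b : Fin (q + 1) → A) (x : A) :
    hochFace (Fin.cons x b : Fin (q + 2) → A) 0 = update b 0 (x * b 0) := by
  funext k
  rw [hochFace_zero]
  refine Fin.cases ?_ (fun l => ?_) k
  · simp
  · have : ((Fin.succ l : Fin (q + 1)) : ℕ) ≠ 0 := by simp
    have hq : (l.succ : Fin (q + 1)) ≠ 0 := Fin.succ_ne_zero l
    rw [if_neg this, update_of_ne hq, Fin.cons_succ]

theorem ss_faceC {ρ : Coch A 1 →L[ℂ] (A →L[ℂ] ℂ)} (hρ : IsSplit ρ) {q : ℕ} (y : Coch A q) :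
    ss ρ (faceC y) = y := by
  ext a
  rw [ss_apply, hρ.pi (evalZ y a)]
  · rw [evalZ_apply, update_eq_self]
  · intro u v
    rw [slot2_vec, upd2_cons, faceC_apply, face_cons, evalZ_apply, update_self, update_idem]

theorem RR_zero (ρ : Coch A 1 →L[ℂ] (A →L[ℂ] ℂ)) {q : ℕ} (φ : Coch A (q + 1)) :
    RR ρ 0 φ = faceC (ss ρ φ) := by
  ext a
  rw [faceC_apply, ss_apply, RR_apply]
  have h0 : hochFace a 0 0 = a 0 * a (0 + 1) := by
    rw [hochFace_zero, if_pos (by rfl), zero_add]; rfl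
  rw [h0]
  congr 2
  refine coch_one_ext fun x y => ?_
  rw [slot2_vec, slot2_vec]
  congr 1
  funext k
  have h01 : (0 : Fin (q + 2)) + 1 = 1 := zero_add 1
  rw [h01, upd2_cons]
  refine Fin.cases ?_ (fun l => ?_) k
  · rw [upd2_left (by simp), Fin.cons_zero]
  · rw [Fin.cons_succ]
    by_cases hl : l = 0
    · subst hl; exact (upd2_right _ _ _ _ _).trans (by rw [update_self])
    · rw [update_of_ne hl, upd2_off (Fin.succ_ne_zero _), hochFace_zero, if_neg]
      · exact fun h => hl (Fin.ext h)
      · intro h; exact hl (Fin.succ_injective _ h)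

theorem RR_zero_faceC {ρ : Coch A 1 →L[ℂ] (A →L[ℂ] ℂ)} (hρ : IsSplit ρ) {q : ℕ} (y : Coch A q) :
    RR ρ 0 (faceC y) = faceC y := by
  rw [RR_zero, ss_faceC hρ]

theorem RR_rotC (ρ : Coch A 1 →L[ℂ] (A →L[ℂ] ℂ)) {q : ℕ} (φ : Coch A (q + 1))
    (c j : Fin (q + 2)) : RR ρ j (rotC c φ) = rotC c (RR ρ (j - c) φ) := by
  ext a
  rw [rotC_apply, RR_apply, RR_apply]
  have h1 : rotT c a (j - c) = a j := by
    simp only [rotT]; congr 1; abel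
  have h2 : rotT c a (j - c + 1) = a (j + 1) := by
    simp only [rotT]; congr 1; abel
  rw [h1, h2]
  congr 2
  refine coch_one_ext fun x y => ?_
  rw [slot2_vec, slot2_vec, rotC_apply]
  congr 1
  funext k
  have h3 : ∀ k, rotT c (upd2 j (j + 1) a x y) k = upd2 j (j + 1) a x y (k + c) := fun _ => rfl
  by_cases hk : k = j - c
  · subst hk
    rw [upd2_left (succ_ne_self' _), h3, sub_add_cancel, upd2_left (succ_ne_self' _)]
  by_cases hk2 : k = j - c + 1
  · subst hk2
    rw [upd2_right, h3, show j - c + 1 + c = j + 1 by abel, upd2_right]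
  rw [upd2_off hk hk2, h3, upd2_off]
  · rfl
  · intro h; apply hk; rw [← h]; abel
  · intro h; apply hk2; rw [show j - c + 1 = j + 1 - c by abel, ← h]; abel

theorem zero_add_one_succ {q : ℕ} : (Fin.succ 0 : Fin (q + 3)) + 1 = Fin.succ (1 : Fin (q + 2)) := by
  apply Fin.ext
  rw [fin_add_val]
  have h1 : ((Fin.succ 0 : Fin (q + 3)) : ℕ) = 1 := rfl
  have h2 : ((1 : Fin (q + 3)) : ℕ) = 1 := rfl
  have h3 : ((Fin.succ (1 : Fin (q + 2)) : Fin (q + 3)) : ℕ) = 2 := rfl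
  rw [h3, if_pos (by omega)]; omega

theorem RR_succ_faceC {ρ : Coch A 1 →L[ℂ] (A →L[ℂ] ℂ)} (hρ : IsSplit ρ) {q : ℕ}
    (y : Coch A (q + 1)) (j : Fin (q + 2)) :
    RR ρ j.succ (faceC y) = faceC (RR ρ j y) := by
  ext a
  rw [faceC_apply, RR_apply, RR_apply]
  by_cases hj0 : j = 0
  · subst hj0
    have hs : (Fin.succ 0 : Fin (q + 3)) + 1 = Fin.succ (0 + 1) := by
      rw [zero_add, zero_add_one_succ]
    have e0 : hochFace a 0 0 = a 0 * a (Fin.succ 0) := by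
      rw [hochFace_zero, if_pos (by rfl)]; rfl
    have e1 : hochFace a 0 (0 + 1) = a (Fin.succ (0 + 1)) := by
      rw [hochFace_zero, if_neg]
      simp
    rw [e0, e1, mul_assoc]
    have := hρ.l (a 0) (slot2 y 0 (0 + 1) (succ_ne_self' _) (hochFace a 0))
      (slot2 (faceC y) (Fin.succ 0) (Fin.succ 0 + 1) (succ_ne_self' _) a) (fun u v => by
        rw [slot2_vec, slot2_vec, faceC_apply]
        congr 1
        simp only [hs, upd2]
        rw [face_update_succ, face_update_succ, if_pos rfl, if_neg (by simp)])
    have e3 : a (Fin.succ 0 + 1) = a (Fin.succ (0 + 1)) := by rw [hs]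
    rw [this, e3]
  by_cases hjl : j = Fin.last (q + 1)
  · subst hjl
    have hs : (Fin.succ (Fin.last (q + 1)) : Fin (q + 3)) + 1 = 0 := by
      simp
    have hs' : (Fin.last (q + 1) : Fin (q + 2)) + 1 = 0 := by
      simp
    have e0 : hochFace a 0 0 = a 0 * a 1 := by
      rw [hochFace_zero, if_pos (by rfl)]; rfl
    have e1 : hochFace a 0 (Fin.last (q + 1)) = a (Fin.succ (Fin.last (q + 1))) := by
      rw [hochFace_zero, if_neg]
      simp
    have := hρ.r (a 1) (slot2 y (Fin.last (q + 1)) (Fin.last (q + 1) + 1) (succ_ne_self' _) (hochFace a 0))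
      (slot2 (faceC y) (Fin.succ (Fin.last (q + 1))) (Fin.succ (Fin.last (q + 1)) + 1)
        (succ_ne_self' _) a) (fun u v => by
        rw [slot2_vec, slot2_vec, faceC_apply]
        congr 1
        simp only [hs, hs', upd2]
        rw [face_update_zero, face_update_succ, if_neg (by simp), update_of_ne]
        intro h
        have := congrArg Fin.val h
        simp at this)
    have e2 : hochFace a 0 (Fin.last (q + 1) + 1) = a 0 * a 1 := by rw [hs', e0]
    have e3 : a (Fin.succ (Fin.last (q + 1)) + 1) = a 0 := by rw [hs]
    rw [this, e3, e2, e1, mul_assoc]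
  · have hs : (Fin.succ j : Fin (q + 3)) + 1 = Fin.succ (j + 1) := by
      apply Fin.ext
      have hjv : (j : ℕ) ≠ q + 1 := fun h => hjl (Fin.ext h)
      have := j.2
      have h2 : ((1 : Fin (q + 3)) : ℕ) = 1 := rfl
      have h3 : ((1 : Fin (q + 2)) : ℕ) = 1 := rfl
      rw [fin_add_val, Fin.val_succ, Fin.val_succ, fin_add_val]
      rw [if_pos (by omega), if_pos (by omega)]; omega
    have hj1 : j + 1 ≠ 0 := by
      intro h
      apply hjl
      exact add_right_cancel (h.trans (by simp : (0 : Fin (q + 2)) = Fin.last (q + 1) + 1))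
    have f0 : ∀ k : Fin (q + 2), k ≠ 0 → hochFace a 0 k = a k.succ := by
      intro k hk
      rw [hochFace_zero, if_neg]
      exact fun h => hk (Fin.ext h)
    have e3 : a (Fin.succ j + 1) = a (Fin.succ (j + 1)) := by rw [hs]
    rw [f0 j hj0, f0 _ hj1, e3]
    congr 2
    refine coch_one_ext fun u v => ?_
    rw [slot2_vec, slot2_vec, faceC_apply]
    congr 1
    simp only [hs, upd2]
    rw [face_update_succ, face_update_succ, if_neg hj0, if_neg hj1]

theorem allFace_cons {q : ℕ} (x : A) (c : Fin (q + 2) → A) (j : ℕ) (hj : j < q + 1) :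
    allFace (Fin.cons x c : Fin (q + 3) → A) (j + 1) =
      (Fin.cons x (allFace c j) : Fin (q + 2) → A) := by
  funext k
  rw [allFace_apply, if_pos (by omega)]
  refine Fin.cases ?_ (fun l => ?_) k
  · rw [if_pos (by simp)]; rfl
  · have e0 : (Fin.cons x (allFace c j) : Fin (q + 2) → A) l.succ = allFace c j l := rfl
    rw [e0, allFace_apply, if_pos hj, Fin.val_succ]
    have e1 : (Fin.cons x c : Fin (q + 3) → A) l.succ.castSucc = c l.castSucc := rfl
    have e2 : (Fin.cons x c : Fin (q + 3) → A) l.succ.succ = c l.succ := rfl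
    rw [e1, e2]
    rcases lt_trichotomy (l : ℕ) j with h | h | h
    · rw [if_pos (by omega), if_pos h]
    · rw [if_neg (by omega), if_pos (by omega), if_neg (by omega), if_pos h]
    · rw [if_neg (by omega), if_neg (by omega), if_neg (by omega), if_neg (by omega)]

theorem allFace_update {q : ℕ} (a : Fin (q + 2) → A) (y : A) (j : ℕ) (h0 : 0 < j)
    (hj : j < q + 1) :
    allFace (update a 0 y) j = update (allFace a j) 0 y := by
  funext k
  rw [allFace_apply, if_pos hj]
  refine Fin.cases ?_ (fun l => ?_) k
  · rw [if_pos (by simpa using h0), update_self]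
    simp
  · have e1 : ∀ l : Fin q, l.succ.castSucc ≠ (0 : Fin (q + 2)) := fun l h => by
      have := congrArg Fin.val h
      simp at this
    rw [update_of_ne (e1 l), update_of_ne (Fin.succ_ne_zero _), update_of_ne (Fin.succ_ne_zero _),
      allFace_apply, if_pos hj]

theorem lastFace_cons {q : ℕ} (a : Fin (q + 2) → A) (x y : A) :
    lastFace (Fin.cons x (update a 0 y) : Fin (q + 3) → A) =
      (Fin.cons (a (Fin.last (q + 1)) * x) (update (lastFace a) 0 y) : Fin (q + 2) → A) := by
  funext k
  refine Fin.cases ?_ (fun l => ?_) k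
  · rw [lastFace, if_pos rfl, Fin.cons_zero]
    change update a 0 y (Fin.last (q + 1)) * x = _
    rw [update_of_ne]
    · rfl
    intro h
    have := congrArg Fin.val h
    simp at this
  · rw [lastFace, if_neg (Fin.succ_ne_zero _), Fin.cons_succ]
    change update a 0 y l.castSucc = _
    by_cases hl : l = 0
    · subst hl; simp
    · rw [update_of_ne hl, update_of_ne, lastFace, if_neg hl]
      intro h
      apply hl
      apply Fin.ext
      have := congrArg Fin.val h
      simpa using this

theorem b_ss_aux {ρ : Coch A 1 →L[ℂ] (A →L[ℂ] ℂ)} (hρ : IsSplit ρ) {q : ℕ}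
    (z : Coch A (q + 1)) (a : Fin (q + 2) → A) (j : ℕ) (hj : j < q + 2) :
    ∃ Ψ : Coch A 1,
      (∀ x y, Ψ ![x, y] = z (allFace (Fin.cons x (update a 0 y) : Fin (q + 3) → A) (j + 1))) ∧
      ρ Ψ (a 0) = ss ρ z (allFace a j) := by
  rcases Nat.eq_zero_or_pos j with h0 | h0
  · subst h0
    have hf : ∀ b : Fin (q + 2) → A, allFace b 0 = hochFace b 0 := fun b => by
      rw [allFace, dif_pos (by omega)]
      try rfl
    have key : ∀ x y, actR (slot2 z 0 1 (by simp) (Fin.cons 0 (allFace a 0) : Fin (q + 2) → A)) (a 1)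
        ![x, y] = z (allFace (Fin.cons x (update a 0 y) : Fin (q + 3) → A) (0 + 1)) := by
      intro x y
      rw [actR_vec, slot2_vec, upd2_cons, allFace_cons _ _ _ (by omega), hf, hf, face_update_zero]
    refine ⟨_, key, ?_⟩
    rw [hρ.r (a 1) _ _ (actR_vec _ _), ss_apply]
    congr 1
  rcases Nat.lt_or_ge j (q + 1) with h1 | h1
  · refine ⟨slot2 z 0 1 (by simp) (Fin.cons 0 (allFace a j) : Fin (q + 2) → A), ?_, ?_⟩
    · intro x y
      rw [slot2_vec, upd2_cons, allFace_cons _ _ _ h1, allFace_update _ _ _ h0 h1]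
    · rw [ss_apply]
      congr 1
      rw [allFace_apply, if_pos h1, if_pos (by simpa using h0)]; rfl
  · have hf : allFace a j = lastFace a := by rw [allFace, dif_neg (by omega)]
    refine ⟨actL (slot2 z 0 1 (by simp) (Fin.cons 0 (lastFace a) : Fin (q + 2) → A))
      (a (Fin.last (q + 1))), ?_, ?_⟩
    · intro x y
      rw [actL_vec, slot2_vec, upd2_cons, allFace, dif_neg (by omega), lastFace_cons]
    · rw [hρ.l _ _ _ (actL_vec _ _), ss_apply, hf]
      congr 1

theorem b_ss {ρ : Coch A 1 →L[ℂ] (A →L[ℂ] ℂ)} (hρ : IsSplit ρ) {q : ℕ}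
    (z : Coch A (q + 1)) (hz : hochDelta (q + 1) ⇑z = 0) :
    hochDelta q ⇑(ss ρ z) = ⇑z := by
  funext a
  have hch := fun j : Fin (q + 2) => b_ss_aux hρ z a j j.2
  choose Ψ hΨ hρΨ using hch
  have h0 : slot2 (faceC z) 0 1 (by simp) (Fin.cons 0 a : Fin (q + 3) → A) =
      ∑ j : Fin (q + 2), (-1 : ℂ) ^ (j : ℕ) • Ψ j := by
    refine coch_one_ext fun x y => ?_
    rw [slot2_vec, upd2_cons, _root_.sum_apply, faceC_apply]
    have h := congrFun hz (Fin.cons x (update a 0 y) : Fin (q + 3) → A)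
    rw [hochDelta_eq_range, Finset.sum_range_succ', Finset.sum_range] at h
    have h1 : allFace (Fin.cons x (update a 0 y) : Fin (q + 3) → A) 0 =
        hochFace (Fin.cons x (update a 0 y) : Fin (q + 3) → A) 0 := by
      rw [allFace, dif_pos (by omega)]; rfl
    rw [h1] at h
    simp only [pow_zero, one_mul, Pi.zero_apply] at h
    rw [eq_neg_of_add_eq_zero_right h, ← Finset.sum_neg_distrib]
    refine Finset.sum_congr rfl fun j _ => ?_
    rw [_root_.smul_apply, hΨ, smul_eq_mul, pow_succ]
    ring
  have h1 : ss ρ (faceC z) a = z a := by rw [ss_faceC hρ]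
  rw [ss_apply, h0] at h1
  rw [← h1, hochDelta_eq_range, Finset.sum_range, map_sum, _root_.sum_apply]
  refine Finset.sum_congr rfl fun j _ => ?_
  rw [map_smul, _root_.smul_apply, hρΨ, smul_eq_mul]

end helpers3


section helpers4

set_option linter.unusedSectionVars false
set_option linter.unusedSimpArgs false

open Function

variable [IsScalarTower ℂ A A] [SMulCommClass ℂ A A]

/-- Iterated application of the operators `R_j`. -/
noncomputable def fld (ρ : Coch A 1 →L[ℂ] (A →L[ℂ] ℂ)) {q : ℕ} (l : List (Fin (q + 2)))
    (φ : Coch A (q + 1)) : Coch A (q + 1) :=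
  l.foldl (fun φ j => RR ρ j φ) φ

theorem fld_nil (ρ : Coch A 1 →L[ℂ] (A →L[ℂ] ℂ)) {q : ℕ} (φ : Coch A (q + 1)) :
    fld ρ [] φ = φ := rfl

theorem fld_cons (ρ : Coch A 1 →L[ℂ] (A →L[ℂ] ℂ)) {q : ℕ} (j : Fin (q + 2))
    (l : List (Fin (q + 2))) (φ : Coch A (q + 1)) :
    fld ρ (j :: l) φ = fld ρ l (RR ρ j φ) := rfl

theorem fld_append (ρ : Coch A 1 →L[ℂ] (A →L[ℂ] ℂ)) {q : ℕ} (j : Fin (q + 2))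
    (l : List (Fin (q + 2))) (φ : Coch A (q + 1)) :
    fld ρ (l ++ [j]) φ = RR ρ j (fld ρ l φ) := by
  simp [fld]

theorem fld_rotC (ρ : Coch A 1 →L[ℂ] (A →L[ℂ] ℂ)) {q : ℕ} (c : Fin (q + 2))
    (l : List (Fin (q + 2))) (φ : Coch A (q + 1)) :
    fld ρ l (rotC c φ) = rotC c (fld ρ (l.map (· - c)) φ) := by
  induction l generalizing φ with
  | nil => rfl
  | cons j l ih => rw [fld_cons, RR_rotC, ih]; rfl

theorem fld_faceC {ρ : Coch A 1 →L[ℂ] (A →L[ℂ] ℂ)} (hρ : IsSplit ρ) {q : ℕ}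
    (l : List (Fin (q + 2))) (y : Coch A (q + 1)) :
    fld ρ (l.map Fin.succ) (faceC y) = faceC (fld ρ l y) := by
  induction l generalizing y with
  | nil => rfl
  | cons j l ih => rw [List.map_cons, fld_cons, RR_succ_faceC hρ, ih]; rfl

theorem norm_fld_le {ρ : Coch A 1 →L[ℂ] (A →L[ℂ] ℂ)} {K : ℝ} (hK : ‖ρ‖ ≤ K) {q : ℕ}
    (l : List (Fin (q + 2))) (φ : Coch A (q + 1)) :
    ‖fld ρ l φ‖ ≤ K ^ l.length * ‖φ‖ := by
  have hK0 : 0 ≤ K := ρ.opNorm_nonneg.trans hK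
  induction l generalizing φ with
  | nil => simp [fld_nil]
  | cons j l ih =>
    rw [fld_cons, List.length_cons, pow_succ, mul_assoc]
    refine (ih _).trans ?_
    gcongr
    refine (norm_RR_le ρ j φ).trans ?_
    gcongr

/-- The conclusion of the main combinatorial claim. -/
def ClaimP (ρ : Coch A 1 →L[ℂ] (A →L[ℂ] ℂ)) (K : ℝ) {q : ℕ} (l : List (Fin (q + 2)))
    (φ : Coch A (q + 1)) : Prop :=
  (∀ j ∈ l, RR ρ j (fld ρ l φ) = fld ρ l φ) ∧
  (l.length = q + 1 → ∃ (σ : A →L[ℂ] ℂ) (c : Fin (q + 2)), ‖σ‖ ≤ K ^ (q + 1) * ‖φ‖ ∧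
    ∀ a, fld ρ l φ a = σ (ordProd (q + 1) (rotT c a)))

theorem claim_rot {ρ : Coch A 1 →L[ℂ] (A →L[ℂ] ℂ)} {K : ℝ} (hK : ‖ρ‖ ≤ K) {q : ℕ}
    (c : Fin (q + 2)) (l : List (Fin (q + 2))) (φ : Coch A (q + 1))
    (h : ClaimP ρ K (l.map (· - c)) (rotC (-c) φ)) : ClaimP ρ K l φ := by
  have hK0 : 0 ≤ K := ρ.opNorm_nonneg.trans hK
  have e : fld ρ l φ = rotC c (fld ρ (l.map (· - c)) (rotC (-c) φ)) := by
    rw [← fld_rotC, rotC_rotC, add_neg_cancel, rotC_zero]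
  obtain ⟨h1, h2⟩ := h
  constructor
  · intro j hj
    rw [e, RR_rotC, h1 _ (List.mem_map_of_mem hj)]
  · intro hl
    obtain ⟨σ, d, hσ, hd⟩ := h2 (by rw [List.length_map, hl])
    refine ⟨σ, d + c, hσ.trans ?_, fun a => ?_⟩
    · gcongr
      exact norm_rotC_le _ _
    · rw [e, rotC_apply, hd, rotT_rotT]

theorem claim_main {ρ : Coch A 1 →L[ℂ] (A →L[ℂ] ℂ)} (hρ : IsSplit ρ) {K : ℝ} (hK : ‖ρ‖ ≤ K)
    (q : ℕ) : ∀ (l : List (Fin (q + 2))) (φ : Coch A (q + 1)), l.Nodup → l.length ≤ q + 1 →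
      ClaimP ρ K l φ := by
  have hK0 : 0 ≤ K := ρ.opNorm_nonneg.trans hK
  induction q with
  | zero =>
    intro l φ hn hl
    rcases l with _ | ⟨j, t⟩
    · exact ⟨by simp, by simp⟩
    have ht : t = [] := by
      apply List.eq_nil_of_length_eq_zero
      simp only [List.length_cons] at hl; omega
    subst ht
    refine claim_rot hK j _ _ ?_
    have e : List.map (fun x => x - j) [j] = [0] := by simp
    rw [e]
    generalize rotC (-j) φ = φ
    have e2 : fld ρ [0] φ = faceC (ss ρ φ) := by rw [fld_cons, fld_nil, RR_zero]
    constructor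
    · intro i hi
      obtain rfl : i = 0 := by simpa using hi
      rw [e2, RR_zero_faceC hρ]
    · intro _
      refine ⟨evalZ (ss ρ φ) 0, 0, ?_, fun a => ?_⟩
      · refine ContinuousLinearMap.opNorm_le_bound _ (by positivity) fun x => ?_
        rw [evalZ_apply]
        refine ((ss ρ φ).le_opNorm _).trans ?_
        have := (norm_ss_le ρ φ)
        simp only [Nat.reduceAdd, Finset.univ_unique, Fin.default_eq_zero, Finset.prod_singleton, update_self,
          zero_add, pow_one]
        have h2 : ‖ss ρ φ‖ ≤ K * ‖φ‖ := this.trans (by gcongr)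
        simpa using mul_le_mul_of_nonneg_right h2 (norm_nonneg x)
      · rw [e2, faceC_apply, rotT_zero, evalZ_apply]
        congr 1
        funext i
        obtain rfl : i = 0 := Fin.fin_one_eq_zero i
        rw [hochFace_zero, if_pos (by rfl), update_self]
        rfl
  | succ q ih =>
    intro l φ hn hl
    rcases l with _ | ⟨j, t⟩
    · exact ⟨by simp, by simp⟩
    refine claim_rot hK j _ _ ?_
    have hn' : ((j :: t).map (· - j)).Nodup := hn.map (fun x y h => by simpa using h)
    rw [List.map_cons, sub_self] at hn' ⊢
    generalize rotC (-j) φ = φ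
    have hl' : (t.map (· - j)).length ≤ q + 1 := by
      rw [List.length_map]; simp only [List.length_cons] at hl; omega
    generalize t.map (· - j) = t at hn' hl'
    obtain ⟨s, rfl⟩ : ∃ s : List (Fin (q + 2)), s.map Fin.succ = t := by
      have : t ∈ Set.range (List.map (Fin.succ : Fin (q + 2) → Fin (q + 3))) := by
        rw [Set.range_list_map]
        intro x hx
        have : x ≠ 0 := by
          rintro rfl; exact (List.nodup_cons.1 hn').1 hx
        exact ⟨x.pred this, Fin.succ_pred _ _⟩
      exact this
    have hs : s.Nodup := ((List.nodup_cons.1 hn').2).of_map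
    rw [List.length_map] at hl'
    have hy : ‖ss ρ φ‖ ≤ K * ‖φ‖ := (norm_ss_le ρ φ).trans (by gcongr)
    obtain ⟨h1, h2⟩ := ih s (ss ρ φ) hs hl'
    have e2 : fld ρ (0 :: s.map Fin.succ) φ = faceC (fld ρ s (ss ρ φ)) := by
      rw [fld_cons, RR_zero, fld_faceC hρ]
    constructor
    · intro i hi
      rw [e2]
      rcases List.mem_cons.1 hi with rfl | hi
      · rw [RR_zero_faceC hρ]
      · obtain ⟨k, hk, rfl⟩ := List.mem_map.1 hi
        rw [RR_succ_faceC hρ, h1 k hk]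
    · intro hlen
      obtain ⟨σ, c, hσ, hc⟩ := h2 (by simpa using hlen)
      have hσ' : ‖σ‖ ≤ K ^ (q + 1 + 1) * ‖φ‖ := by
        refine hσ.trans ?_
        rw [pow_succ K (q + 1), mul_assoc]
        gcongr
      by_cases h0 : c = 0
      · refine ⟨σ, 0, hσ', fun a => ?_⟩
        rw [e2, faceC_apply, hc, h0, rotT_zero, rotT_zero, ordProd_face]
      · refine ⟨σ, c.succ, hσ', fun a => ?_⟩
        rw [e2, faceC_apply, hc, ordProd_rot_face _ _ h0]

/-- Signed cyclic functions. -/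
def SCyc {q : ℕ} (χ : Coch A q) : Prop :=
  ∀ (c : Fin (q + 1)) a, χ (rotT c a) = (-1 : ℂ) ^ (c : ℕ) * χ a

/-- The signed norm operator. -/
noncomputable def NN {q : ℕ} (θ : Coch A q) : Coch A q :=
  ∑ i : Fin (q + 1), ((-1 : ℂ) ^ (i : ℕ)) • rotC (-i) θ

theorem NN_apply {q : ℕ} (θ : Coch A q) (a : Fin (q + 1) → A) :
    NN θ a = ∑ i : Fin (q + 1), ((-1 : ℂ) ^ (i : ℕ)) * θ (rotT (-i) a) := by
  rw [NN, _root_.sum_apply]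
  rfl

theorem norm_NN_le {q : ℕ} (θ : Coch A q) : ‖NN θ‖ ≤ (q + 1) * ‖θ‖ := by
  unfold NN
  refine (norm_sum_le _ _).trans ?_
  refine (Finset.sum_le_sum (g := fun _ => ‖θ‖) fun i _ => ?_).trans ?_
  · rw [norm_smul]
    simpa using norm_rotC_le (-i) θ
  · simp

theorem NN_scyc {q : ℕ} (hq : Odd q) (θ : Coch A q) : SCyc (NN θ) := by
  intro c a
  rw [NN_apply, NN_apply, Finset.mul_sum,
    ← Equiv.sum_comp (Equiv.addRight c) (fun i => (-1 : ℂ) ^ (i : ℕ) * θ (rotT (-i) (rotT c a)))]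
  refine Finset.sum_congr rfl fun i _ => ?_
  rw [Equiv.coe_addRight, sgn_add hq, rotT_rotT]
  rw [show -(i + c) + c = -i by abel]
  ring

theorem delta_scyc {q : ℕ} (hq : Odd q) {χ : Coch A q} (hχ : SCyc χ) (a : Fin (q + 2) → A) :
    hochDelta q ⇑χ a = ∑ p : Fin (q + 2), χ (hochFace (rotT p a) 0) := by
  rw [hochDelta_eq, Fin.sum_univ_castSucc (fun p : Fin (q + 2) => χ (hochFace (rotT p a) 0)),
    lastFace_eq, (hq.add_one).neg_one_pow, one_mul]
  congr 1
  refine Finset.sum_congr rfl fun i _ => ?_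
  rw [← face_rot, hχ]

theorem sum_delta {q : ℕ} (hq : Odd q) (θ : Coch A q) (a : Fin (q + 2) → A) :
    ∑ p : Fin (q + 2), hochDelta q ⇑θ (rotT p a) =
      hochDelta q ⇑(NN θ) a + ∑ p : Fin (q + 2), θ (hochFace (rotT p a) 0) := by
  rw [delta_scyc hq (NN_scyc hq θ)]
  simp only [hochDelta_eq]
  rw [Finset.sum_add_distrib]
  congr 1
  · simp only [NN_apply]
    rw [Finset.sum_comm]
    conv_rhs => rw [Finset.sum_comm]
    refine Finset.sum_congr rfl fun i _ => ?_
    rw [← Equiv.sum_comp (Equiv.addLeft i.castSucc) (fun p => (-1 : ℂ) ^ (i : ℕ) *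
      θ (rotT (-i) (hochFace (rotT p a) 0)))]
    refine Finset.sum_congr rfl fun p _ => ?_
    rw [Equiv.coe_addLeft, ← rotT_rotT, ← face_rot, rotT_rotT, neg_add_cancel, rotT_zero]
  · have := Equiv.sum_comp (Equiv.addLeft (Fin.last (q + 1)))
      (fun p : Fin (q + 2) => θ (hochFace (rotT p a) 0))
    rw [← this]
    refine Finset.sum_congr rfl fun p _ => ?_
    rw [(hq.add_one).neg_one_pow, one_mul, lastFace_eq, rotT_rotT]
    rfl

/-- Sum of all `R_j`. -/
noncomputable def SS (ρ : Coch A 1 →L[ℂ] (A →L[ℂ] ℂ)) {q : ℕ} (φ : Coch A (q + 1)) :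
    Coch A (q + 1) := ∑ j : Fin (q + 2), RR ρ j φ

theorem key_identity {ρ : Coch A 1 →L[ℂ] (A →L[ℂ] ℂ)} (hρ : IsSplit ρ) {q : ℕ} (hq : Odd q)
    (z : Coch A (q + 1)) (hz : hochDelta (q + 1) ⇑z = 0) (hc : ∀ c, rotC c z = z)
    (a : Fin (q + 2) → A) :
    ((q : ℂ) + 2) * z a = hochDelta q ⇑(NN (ss ρ z)) a + SS ρ z a := by
  have h := sum_delta hq (ss ρ z) a
  rw [b_ss hρ z hz] at h
  have h1 : ∀ p, z (rotT p a) = z a := fun p => by rw [← rotC_apply, hc]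
  simp only [h1] at h
  rw [Finset.sum_const, Finset.card_univ, Fintype.card_fin, nsmul_eq_mul] at h
  push_cast at h
  rw [h, SS, _root_.sum_apply]
  congr 1
  refine Finset.sum_congr rfl fun p _ => ?_
  rw [← faceC_apply, ← RR_zero, ← rotC_apply, ← sub_self p, ← RR_rotC, hc]

theorem SS_rotC (ρ : Coch A 1 →L[ℂ] (A →L[ℂ] ℂ)) {q : ℕ} (φ : Coch A (q + 1)) (c : Fin (q + 2)) :
    SS ρ (rotC c φ) = rotC c (SS ρ φ) := by
  ext a
  rw [rotC_apply, SS, SS, _root_.sum_apply, _root_.sum_apply,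
    ← Equiv.sum_comp (Equiv.addRight c)]
  refine Finset.sum_congr rfl fun p _ => ?_
  rw [RR_rotC, Equiv.coe_addRight, add_sub_cancel_right, rotC_apply]

end helpers4


section helpers5

set_option linter.unusedSectionVars false
set_option linter.unusedSimpArgs false

open Function

theorem hochDelta_lin {q : ℕ} (f g : (Fin (q + 1) → A) → ℂ) (x : ℂ) (a : Fin (q + 2) → A) :
    hochDelta q (fun a => f a + x * g a) a = hochDelta q f a + x * hochDelta q g a := by
  rw [hochDelta_eq_range, hochDelta_eq_range, hochDelta_eq_range, Finset.mul_sum,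
    ← Finset.sum_add_distrib]
  refine Finset.sum_congr rfl fun j _ => ?_
  ring

variable [IsScalarTower ℂ A A] [SMulCommClass ℂ A A]

/-- The generators at level `k`. -/
def gens (ρ : Coch A 1 →L[ℂ] (A →L[ℂ] ℂ)) {q : ℕ} (ψ : Coch A (q + 1)) (k : ℕ) :
    Set (Coch A (q + 1)) :=
  {w | ∃ l : List (Fin (q + 2)), l.Nodup ∧ l.length = k ∧ w = fld ρ l ψ}

/-- The iteration operator. -/
noncomputable def TT (ρ : Coch A 1 →L[ℂ] (A →L[ℂ] ℂ)) (q k : ℕ) :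
    Coch A (q + 1) →ₗ[ℝ] Coch A (q + 1) :=
  ((q : ℝ) + 2 - k)⁻¹ • ((∑ j : Fin (q + 2), (RR ρ j).restrictScalars ℝ) - (k : ℝ) • LinearMap.id)

theorem TT_eq (ρ : Coch A 1 →L[ℂ] (A →L[ℂ] ℂ)) (q k : ℕ) (z : Coch A (q + 1)) :
    TT ρ q k z = ((q : ℝ) + 2 - k)⁻¹ • (SS ρ z - (k : ℝ) • z) := by
  simp [TT, SS]

theorem TT_apply (ρ : Coch A 1 →L[ℂ] (A →L[ℂ] ℂ)) (q k : ℕ) (z : Coch A (q + 1))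
    (a : Fin (q + 2) → A) :
    TT ρ q k z a = ((q : ℂ) + 2 - k)⁻¹ * (SS ρ z a - (k : ℂ) * z a) := by
  rw [TT_eq, _root_.smul_apply, _root_.sub_apply, _root_.smul_apply,
    Complex.real_smul, Complex.real_smul]
  push_cast
  rfl

theorem TT_hull {ρ : Coch A 1 →L[ℂ] (A →L[ℂ] ℂ)} (hρ : IsSplit ρ)
    {q : ℕ} (ψ : Coch A (q + 1)) {k : ℕ} (hk : k ≤ q) {z : Coch A (q + 1)}
    (hz : z ∈ convexHull ℝ (gens ρ ψ k)) : TT ρ q k z ∈ convexHull ℝ (gens ρ ψ (k + 1)) := by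
  have hsub : convexHull ℝ (gens ρ ψ k) ⊆ TT ρ q k ⁻¹' convexHull ℝ (gens ρ ψ (k + 1)) := by
    refine convexHull_min ?_ ((convex_convexHull ℝ _).linear_preimage _)
    rintro w ⟨l, hn, hl, rfl⟩
    have hA := (claim_main hρ (le_refl ‖ρ‖) q l ψ hn (by omega)).1
    rw [Set.mem_preimage, TT_eq]
    have hcard : l.toFinset.card = k := by rw [List.toFinset_card_of_nodup hn, hl]
    have h1 : SS ρ (fld ρ l ψ) - (k : ℝ) • fld ρ l ψ =
        ∑ j ∈ l.toFinsetᶜ, RR ρ j (fld ρ l ψ) := by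
      rw [SS, ← Finset.sum_add_sum_compl l.toFinset]
      have : ∑ j ∈ l.toFinset, RR ρ j (fld ρ l ψ) = (k : ℝ) • fld ρ l ψ := by
        rw [Finset.sum_congr rfl (fun j hj => hA j (List.mem_toFinset.1 hj)), Finset.sum_const,
          hcard, ← Nat.cast_smul_eq_nsmul ℝ]
      rw [this, add_sub_cancel_left]
    have hcpos : 0 < (q : ℝ) + 2 - k := by
      have : (k : ℝ) ≤ q := by exact_mod_cast hk
      linarith
    rw [h1, Finset.smul_sum]
    refine (convex_convexHull ℝ _).sum_mem (fun _ _ => (inv_pos.2 hcpos).le) ?_ ?_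
    · rw [Finset.sum_const, Finset.card_compl, hcard, Fintype.card_fin, nsmul_eq_mul,
        Nat.cast_sub (by omega)]
      push_cast
      exact mul_inv_cancel₀ hcpos.ne'
    · intro j hj
      apply subset_convexHull
      refine ⟨l ++ [j], ?_, by simp [hl], (fld_append ρ j l ψ).symm⟩
      have hj' : j ∉ l := by simpa using hj
      rw [List.nodup_append]
      refine ⟨hn, by simp, ?_⟩
      intro a ha b hb
      rw [List.mem_singleton] at hb
      rintro rfl
      exact hj' (hb ▸ ha)
  exact hsub hz

theorem norm_hull {ρ : Coch A 1 →L[ℂ] (A →L[ℂ] ℂ)} {K : ℝ} (hK : ‖ρ‖ ≤ K)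
    {q : ℕ} (ψ : Coch A (q + 1)) {k : ℕ} {z : Coch A (q + 1)}
    (hz : z ∈ convexHull ℝ (gens ρ ψ k)) : ‖z‖ ≤ K ^ k * ‖ψ‖ := by
  have hsub : convexHull ℝ (gens ρ ψ k) ⊆ Metric.closedBall 0 (K ^ k * ‖ψ‖) := by
    refine convexHull_min ?_ (convex_closedBall _ _)
    rintro w ⟨l, hn, hl, rfl⟩
    rw [mem_closedBall_zero_iff, ← hl]
    exact norm_fld_le hK l ψ
  exact mem_closedBall_zero_iff.1 (hsub hz)

/-- Invariant of the iteration. -/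
structure St (ρ : Coch A 1 →L[ℂ] (A →L[ℂ] ℂ)) (K : ℝ) {q : ℕ} (ψ : Coch A (q + 1)) (k : ℕ)
    (z : Coch A (q + 1)) (χ : Coch A q) : Prop where
  hull : z ∈ convexHull ℝ (gens ρ ψ k)
  cyc : ∀ c, rotC c z = z
  coc : hochDelta (q + 1) ⇑z = 0
  scyc : SCyc χ
  eq : ∀ a, ψ a = z a + hochDelta q ⇑χ a
  norm : ‖χ‖ ≤ k * (((q : ℝ) + 1) / 2 * (K ^ (q + 1) * ‖ψ‖))

theorem St_step {ρ : Coch A 1 →L[ℂ] (A →L[ℂ] ℂ)} (hρ : IsSplit ρ) {K : ℝ} (hK : ‖ρ‖ ≤ K)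
    (hK1 : 1 ≤ K) {q : ℕ} (hq : Odd q) {ψ : Coch A (q + 1)} {k : ℕ} (hk : k ≤ q)
    {z : Coch A (q + 1)} {χ : Coch A q} (h : St ρ K ψ k z χ) :
    ∃ z' χ', St ρ K ψ (k + 1) z' χ' := by
  have hkq : (k : ℝ) ≤ q := by exact_mod_cast hk
  have hc2 : 2 ≤ (q : ℝ) + 2 - k := by linarith
  have hcne : ((q : ℂ) + 2 - k) ≠ 0 := by
    have : ((((q : ℝ) + 2 - k : ℝ)) : ℂ) ≠ 0 := by
      rw [Complex.ofReal_ne_zero]; linarith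
    push_cast at this
    exact this
  set x : ℂ := ((q : ℂ) + 2 - k)⁻¹ with hx
  have hxn : ‖x‖ ≤ 1 / 2 := by
    have : x = ((((q : ℝ) + 2 - k)⁻¹ : ℝ) : ℂ) := by rw [hx]; push_cast; rfl
    rw [this, Complex.norm_real, Real.norm_eq_abs, abs_of_pos (inv_pos.2 (by linarith)), one_div]
    exact inv_anti₀ (by norm_num) hc2
  have hid : ∀ a, TT ρ q k z a = z a + (-x) * hochDelta q ⇑(NN (ss ρ z)) a := by
    intro a
    have := key_identity hρ hq z h.coc h.cyc a
    rw [TT_apply, ← hx, eq_sub_of_add_eq' this.symm]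
    have hx1 : x * ((q : ℂ) + 2 - k) = 1 := inv_mul_cancel₀ hcne
    linear_combination z a * hx1
  refine ⟨TT ρ q k z, χ + x • NN (ss ρ z), TT_hull hρ ψ hk h.hull, ?_, ?_, ?_, ?_, ?_⟩
  · intro c
    ext a
    rw [rotC_apply, TT_apply, TT_apply, ← rotC_apply, ← rotC_apply, ← SS_rotC, h.cyc]
  · funext a
    have e : ⇑(TT ρ q k z) = fun a => z a + (-x) * hochDelta q ⇑(NN (ss ρ z)) a := funext hid
    rw [e, hochDelta_lin, hochDelta_hochDelta, h.coc]
    simp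
  · intro c a
    have := NN_scyc hq (ss ρ z) c a
    rw [_root_.add_apply, _root_.add_apply, _root_.smul_apply, _root_.smul_apply, this, h.scyc c a]
    simp only [smul_eq_mul]
    ring
  · intro a
    have e : ⇑(χ + x • NN (ss ρ z)) = fun a => χ a + x * (NN (ss ρ z)) a := rfl
    rw [e, hochDelta_lin, hid, h.eq a]
    ring
  · have hK0 : 0 ≤ K := by linarith
    have h1 : ‖x • NN (ss ρ z)‖ ≤ ((q : ℝ) + 1) / 2 * (K ^ (q + 1) * ‖ψ‖) := by
      rw [norm_smul]
      have hz := norm_hull hK ψ h.hull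
      have hs : ‖ss ρ z‖ ≤ K ^ (q + 1) * ‖ψ‖ := by
        calc ‖ss ρ z‖ ≤ ‖ρ‖ * ‖z‖ := norm_ss_le ρ z
          _ ≤ K * (K ^ k * ‖ψ‖) := by gcongr
          _ = K ^ (k + 1) * ‖ψ‖ := by ring
          _ ≤ K ^ (q + 1) * ‖ψ‖ := by
            have : K ^ (k + 1) ≤ K ^ (q + 1) := pow_le_pow_right₀ hK1 (by omega)
            gcongr
      calc ‖x‖ * ‖NN (ss ρ z)‖ ≤ 1 / 2 * (((q : ℝ) + 1) * ‖ss ρ z‖) := by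
            gcongr
            exact norm_NN_le _
        _ ≤ 1 / 2 * (((q : ℝ) + 1) * (K ^ (q + 1) * ‖ψ‖)) := by gcongr
        _ = _ := by ring
    refine (norm_add_le _ _).trans ?_
    push_cast
    have := h.norm
    linarith

theorem St_iter {ρ : Coch A 1 →L[ℂ] (A →L[ℂ] ℂ)} (hρ : IsSplit ρ) {K : ℝ} (hK : ‖ρ‖ ≤ K)
    (hK1 : 1 ≤ K) {q : ℕ} (hq : Odd q) {ψ : Coch A (q + 1)}
    (hcyc : ∀ c, rotC c ψ = ψ) (hcoc : hochDelta (q + 1) ⇑ψ = 0) (k : ℕ) (hk : k ≤ q + 1) :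
    ∃ z χ, St ρ K ψ k z χ := by
  induction k with
  | zero =>
    refine ⟨ψ, 0, subset_convexHull ℝ _ ⟨[], by simp, rfl, rfl⟩, hcyc, hcoc, ?_, ?_, ?_⟩
    · intro c a; simp
    · intro a
      have : hochDelta q ⇑(0 : Coch A q) a = 0 := by
        rw [hochDelta_eq_range]; simp
      rw [this, add_zero]
    · simp
  | succ k ih =>
    obtain ⟨z, χ, h⟩ := ih (by omega)
    exact St_step hρ hK hK1 hq (by omega) h

theorem hull_end {ρ : Coch A 1 →L[ℂ] (A →L[ℂ] ℂ)} (hρ : IsSplit ρ) {K : ℝ} (hK : ‖ρ‖ ≤ K)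
    {q : ℕ} (ψ : Coch A (q + 1)) {z : Coch A (q + 1)}
    (hz : z ∈ convexHull ℝ (gens ρ ψ (q + 1))) :
    ∃ σ : A →L[ℂ] ℂ, ‖σ‖ ≤ K ^ (q + 1) * ‖ψ‖ ∧
      ∀ a, ∑ d : Fin (q + 2), z (rotT d a) = ∑ d : Fin (q + 2), σ (ordProd (q + 1) (rotT d a)) := by
  have hsub : convexHull ℝ (gens ρ ψ (q + 1)) ⊆ {z | ∃ σ : A →L[ℂ] ℂ, ‖σ‖ ≤ K ^ (q + 1) * ‖ψ‖ ∧
      ∀ a, ∑ d : Fin (q + 2), z (rotT d a) =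
        ∑ d : Fin (q + 2), σ (ordProd (q + 1) (rotT d a))} := by
    refine convexHull_min ?_ ?_
    · rintro w ⟨l, hn, hl, rfl⟩
      obtain ⟨σ, c, hσ, hc⟩ := (claim_main hρ hK q l ψ hn (by omega)).2 hl
      refine ⟨σ, hσ, fun a => ?_⟩
      rw [← Equiv.sum_comp (Equiv.addLeft c) (fun d => σ (ordProd (q + 1) (rotT d a)))]
      refine Finset.sum_congr rfl fun d _ => ?_
      rw [hc, rotT_rotT, Equiv.coe_addLeft]
    · rintro w ⟨σ, hσ, h⟩ w' ⟨σ', hσ', h'⟩ s t hs ht hst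
      refine ⟨s • σ + t • σ', ?_, fun a => ?_⟩
      · refine (norm_add_le _ _).trans ?_
        rw [norm_smul, norm_smul, Real.norm_of_nonneg hs, Real.norm_of_nonneg ht]
        calc s * ‖σ‖ + t * ‖σ'‖ ≤ s * (K ^ (q + 1) * ‖ψ‖) + t * (K ^ (q + 1) * ‖ψ‖) := by gcongr
          _ = _ := by rw [← add_mul, hst, one_mul]
      · simp only [_root_.add_apply, _root_.smul_apply, Finset.sum_add_distrib, ← Finset.smul_sum,
          h a, h' a]
  exact hsub hz

theorem clm_zero {ρ : Coch A 1 →L[ℂ] (A →L[ℂ] ℂ)} (hρ : IsSplit ρ) (k : ℕ) :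
    ∀ f : A →L[ℂ] ℂ, (∀ a : Fin (k + 1) → A, f (ordProd k a) = 0) → f = 0 := by
  induction k with
  | zero =>
    intro f hf
    ext x
    exact hf (fun _ => x)
  | succ k ih =>
    intro f hf
    have h : ∀ x y, f (x * y) = 0 := by
      intro x y
      have := ih (f.comp ((ContinuousLinearMap.mul ℂ A).flip y)) (fun a => by
        have h2 := hf (Fin.snoc a y)
        rw [ordProd] at h2
        simpa using h2)
      have := congrArg (fun g => g x) this
      simpa using this
    have := hρ.pi f 0 (fun x y => by rw [h]; rfl)
    rw [← this, map_zero]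

theorem alt_lemma {q : ℕ} (hq : Odd q) (x : Fin (q + 4) → ℂ)
    (h1 : x 0 - ∑ p : Fin (q + 2), (-1 : ℂ) ^ (p : ℕ) * x p.succ.succ = 0)
    (h2 : x (0 + 1) - ∑ p : Fin (q + 2), (-1 : ℂ) ^ (p : ℕ) * x (p.succ.succ + 1) = 0) :
    x 1 = x 2 := by
  rw [Fin.sum_univ_succ] at h1
  rw [Fin.sum_univ_castSucc] at h2
  have e1 : ∀ r : Fin (q + 1), r.castSucc.succ.succ + 1 = (r.succ.succ.succ : Fin (q + 4)) := by
    intro r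
    have := r.2
    have hone : ((1 : Fin (q + 4)) : ℕ) = 1 := rfl
    apply Fin.ext
    rw [fin_add_val, hone]
    simp only [Fin.val_succ, Fin.val_castSucc]
    rw [if_pos (by omega)]
  have e2 : (Fin.last (q + 1)).succ.succ + 1 = (0 : Fin (q + 4)) := by
    simp
  have e3 : (Fin.succ (Fin.succ 0) : Fin (q + 4)) = 2 := rfl
  simp only [e1, e2, e3, Fin.val_castSucc, Fin.val_last, (hq.add_one).neg_one_pow, one_mul,
    Fin.val_succ, pow_succ, zero_add, mul_neg, mul_one, neg_mul, Finset.sum_neg_distrib,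
    Fin.val_zero, pow_zero] at h1 h2
  linear_combination h1 + h2

theorem sum_alt_fin {q : ℕ} (hq : Odd q) : ∑ p : Fin (q + 1), (-1 : ℂ) ^ (p : ℕ) = 0 := by
  rw [← Finset.sum_range (fun i => (-1 : ℂ) ^ i), neg_one_geom_sum, if_pos hq.add_one]

theorem face_sum (σ : A →L[ℂ] ℂ) {q : ℕ} (b : Fin (q + 2) → A) (s : Fin (q + 1) → ℂ) :
    ∑ d : Fin (q + 1), s d * σ (ordProd q (rotT d (hochFace b 0))) =
      s 0 * σ (ordProd (q + 1) b) +
        ∑ p : Fin q, s p.succ * σ (ordProd (q + 1) (rotT p.succ.succ b)) := by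
  rw [Fin.sum_univ_succ, rotT_zero, ordProd_face]
  congr 1
  refine Finset.sum_congr rfl fun p _ => ?_
  rw [ordProd_rot_face _ _ (Fin.succ_ne_zero _)]

theorem g_zero {q : ℕ} (hq : Odd q) (z : Coch A (q + 1)) (σ : A →L[ℂ] ℂ)
    (hcyc : ∀ c, rotC c z = z) (hcoc : hochDelta (q + 1) ⇑z = 0)
    (hz : ∀ a, ((q : ℂ) + 2) * z a = ∑ d : Fin (q + 2), σ (ordProd (q + 1) (rotT d a)))
    (a : Fin (q + 3) → A) :
    ∑ p : Fin (q + 3), (-1 : ℂ) ^ (p : ℕ) * σ (ordProd (q + 2) (rotT p a)) = 0 := by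
  have hq2 : Odd (q + 2) := by
    obtain ⟨r, rfl⟩ := hq; exact ⟨r + 1, by ring⟩
  have hrot : ∀ c b, z (rotT c b) = z b := fun c b => by rw [← rotC_apply, hcyc]
  have h1 : ∑ p : Fin (q + 3), (-1 : ℂ) ^ (p : ℕ) * z (hochFace (rotT p a) 0) = 0 := by
    have h := congrFun hcoc a
    rw [hochDelta_eq, lastFace_eq] at h
    rw [Fin.sum_univ_castSucc (n := q + 2)]
    refine Eq.trans ?_ h
    congr 1
    refine Finset.sum_congr rfl fun i _ => ?_
    rw [← face_rot, hrot]
    rfl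
  have h2 : ∀ b : Fin (q + 3) → A, ((q : ℂ) + 2) * z (hochFace b 0) =
      ∑ e : Fin (q + 3), σ (ordProd (q + 2) (rotT e b)) - σ (ordProd (q + 2) (rotT 1 b)) := by
    intro b
    rw [hz]
    have := face_sum σ b (fun _ => 1)
    simp only [one_mul] at this
    rw [this, Fin.sum_univ_succ (n := q + 2), Fin.sum_univ_succ (n := q + 1), rotT_zero]
    have e : (Fin.succ 0 : Fin (q + 3)) = 1 := rfl
    rw [e]; ring
  have h3 : ∑ p : Fin (q + 3), (-1 : ℂ) ^ (p : ℕ) *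
      (∑ e : Fin (q + 3), σ (ordProd (q + 2) (rotT e a)) - σ (ordProd (q + 2) (rotT (1 + p) a)))
      = 0 := by
    have h4 := congrArg (fun t => ((q : ℂ) + 2) * t) h1
    simp only [Finset.mul_sum, mul_zero] at h4
    rw [← h4]
    refine Finset.sum_congr rfl fun p _ => ?_
    rw [mul_left_comm, h2]
    congr 2
    · rw [← Equiv.sum_comp (Equiv.addRight p) (fun e => σ (ordProd (q + 2) (rotT e a)))]
      refine Finset.sum_congr rfl fun e _ => ?_
      rw [rotT_rotT, Equiv.coe_addRight]
    · rw [rotT_rotT]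
  simp only [mul_sub, Finset.sum_sub_distrib, ← Finset.sum_mul] at h3
  rw [sum_alt_fin hq2, zero_mul, zero_sub, neg_eq_zero] at h3
  rw [← Equiv.sum_comp (Equiv.addLeft (1 : Fin (q + 3)))]
  simp only [Equiv.coe_addLeft, sgn_add hq2, mul_assoc, ← Finset.mul_sum]
  rw [h3, mul_zero]

theorem sigma_trace {ρ : Coch A 1 →L[ℂ] (A →L[ℂ] ℂ)} (hρ : IsSplit ρ) {q : ℕ} (hq : Odd q)
    (σ : A →L[ℂ] ℂ)
    (hg : ∀ a : Fin (q + 3) → A,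
      ∑ p : Fin (q + 3), (-1 : ℂ) ^ (p : ℕ) * σ (ordProd (q + 2) (rotT p a)) = 0) (x y : A) :
    σ (x * y) = σ (y * x) := by
  have h1 : ∀ b : Fin (q + 4) → A, σ (ordProd (q + 3) b) -
      ∑ p : Fin (q + 2), (-1 : ℂ) ^ (p : ℕ) * σ (ordProd (q + 3) (rotT p.succ.succ b)) = 0 := by
    intro b
    have := face_sum σ b (fun d => (-1 : ℂ) ^ (d : ℕ))
    rw [hg] at this
    rw [this]
    simp [pow_succ, sub_eq_add_neg]
  have h2 : ∀ b : Fin (q + 4) → A,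
      σ (ordProd (q + 3) (rotT 1 b)) = σ (ordProd (q + 3) (rotT 2 b)) := by
    intro b
    refine alt_lemma hq (fun e => σ (ordProd (q + 3) (rotT e b))) ?_ ?_
    · simp only [rotT_zero]; exact h1 b
    · have := h1 (rotT 1 b)
      simp only [rotT_rotT] at this
      rw [zero_add]; exact this
  have h3 : ∀ b : Fin (q + 4) → A,
      σ (ordProd (q + 3) b) = σ (ordProd (q + 3) (rotT 1 b)) := by
    intro b
    have := h2 (rotT (-1) b)
    rw [rotT_rotT, rotT_rotT, add_neg_cancel, rotT_zero] at this
    rw [this]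
    congr 3
    have e : (2 : Fin (q + 4)) = 1 + 1 := by
      apply Fin.ext
      rw [fin_add_val]
      have h1 : ((1 : Fin (q + 4)) : ℕ) = 1 := rfl
      have h2 : ((2 : Fin (q + 4)) : ℕ) = 2 := by
        show 2 % (q + 4) = 2
        exact Nat.mod_eq_of_lt (by omega)
      rw [h1, h2, if_pos (by omega)]
    rw [e, add_neg_cancel_right]
  have h4 := clm_zero hρ (q + 2) (σ.comp (ContinuousLinearMap.mul ℂ A x) -
    σ.comp ((ContinuousLinearMap.mul ℂ A).flip x)) (fun a => by
      have h := h3 (Fin.cons x a : Fin (q + 4) → A)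
      rw [ordProd_cons, ordProd_rot_one] at h
      simp only [Fin.cons_zero, Fin.cons_succ] at h
      simpa [sub_eq_zero] using h)
  have h5 := congrArg (fun g => g y) h4
  simpa [sub_eq_zero] using h5

theorem trace_rot {q : ℕ} (σ : A →L[ℂ] ℂ) (hσ : ∀ x y, σ (x * y) = σ (y * x))
    (c : Fin (q + 2)) (a : Fin (q + 2) → A) :
    σ (ordProd (q + 1) (rotT c a)) = σ (ordProd (q + 1) a) := by
  induction c using Fin.induction with
  | zero => rw [rotT_zero]
  | succ i ih =>
    rw [← ih, ← Fin.coeSucc_eq_succ, add_comm i.castSucc 1, ← rotT_rotT, ordProd_rot_one, hσ, ← ordProd_cons]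

theorem main_gen {K : ℝ} (hK1 : 1 ≤ K) (hbf : IsBiflat A K) {q : ℕ} (hq : Odd q)
    (ψ : Coch A (q + 1)) (hcyc : ∀ c, rotC c ψ = ψ) (hcoc : hochDelta (q + 1) ⇑ψ = 0) :
    ∃ (χ : Coch A q) (τ : A →L[ℂ] ℂ), SCyc χ ∧ (∀ a b : A, τ (a * b) = τ (b * a)) ∧
      ⇑ψ = trCochain τ (q + 1) + hochDelta q ⇑χ ∧ ‖τ‖ ≤ K ^ (q + 1) * ‖ψ‖ ∧
      ‖χ‖ ≤ ((q : ℝ) + 1) ^ 2 / 2 * (K ^ (q + 1) * ‖ψ‖) := by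
  obtain ⟨ρ, hK, hpi, hr, hl⟩ := hbf
  have hρ : IsSplit ρ := ⟨hpi, hr, hl⟩
  obtain ⟨z, χ, h⟩ := St_iter hρ hK hK1 hq hcyc hcoc (q + 1) le_rfl
  obtain ⟨σ, hσ, hsum⟩ := hull_end hρ hK ψ h.hull
  have hrot : ∀ c b, z (rotT c b) = z b := fun c b => by rw [← rotC_apply, h.cyc]
  have hz : ∀ a, ((q : ℂ) + 2) * z a = ∑ d : Fin (q + 2), σ (ordProd (q + 1) (rotT d a)) := by
    intro a
    rw [← hsum a]
    simp [hrot]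
  have htr := sigma_trace hρ hq σ (g_zero hq z σ h.cyc h.coc hz)
  refine ⟨χ, σ, h.scyc, htr, ?_, hσ, ?_⟩
  · funext a
    rw [h.eq a, Pi.add_apply, trCochain]
    congr 1
    have h1 := hz a
    simp only [trace_rot σ htr] at h1
    rw [Finset.sum_const, Finset.card_univ, Fintype.card_fin, nsmul_eq_mul] at h1
    push_cast at h1
    refine mul_left_cancel₀ ?_ h1
    have : ((q + 2 : ℕ) : ℂ) ≠ 0 := Nat.cast_ne_zero.2 (by omega)
    push_cast at this
    exact this
  · refine h.norm.trans (le_of_eq ?_)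
    push_cast
    ring

theorem cyc_all {p : ℕ} (f : (Fin (p + 2) → A) → ℂ) (h : ∀ a, f (fun i => a (i - 1)) = f a)
    (c : Fin (p + 2)) (a : Fin (p + 2) → A) : f (rotT c a) = f a := by
  induction c using Fin.induction with
  | zero => rw [rotT_zero]
  | succ i ih =>
    rw [← ih, ← h (rotT i.succ a)]
    congr 1
    funext k
    simp only [rotT]
    congr 1
    rw [← Fin.coeSucc_eq_succ]
    abel

end helpers5

/-- If `A` is a complex Banach algebra which is biflat with
constant `K ≥ 1`, then every cyclic `(2m+2)`-cocycle `ψ` has the form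
`τ^(2m+2) + δχ` for a trace `τ` and a cyclic cochain `χ`, with
`‖τ‖ ≤ K^{2m+2}‖ψ‖` and `‖χ‖ ≤ 2(m+1)³K^{4m+2}‖ψ‖`. -/
theorem biflat_even_cyclic_cocycle_trace_plus_coboundary_quantitative
    {A : Type*} [NonUnitalNormedRing A] [NormedSpace ℂ A]
    [IsScalarTower ℂ A A] [SMulCommClass ℂ A A] [CompleteSpace A]
    (K : ℝ) (hK : 1 ≤ K) (hbf : IsBiflat A K) (m : ℕ)
    (ψ : Coch A (2 * m + 2))
    (hcyc : cycT (2 * m + 2) ⇑ψ = ⇑ψ)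
    (hcocycle : hochDelta (2 * m + 2) ⇑ψ = 0) :
    ∃ (χ : Coch A (2 * m + 1)) (τ : A →L[ℂ] ℂ),
      cycT (2 * m + 1) ⇑χ = ⇑χ ∧
      (∀ a b : A, τ (a * b) = τ (b * a)) ∧
      ⇑ψ = trCochain τ (2 * m + 2) + hochDelta (2 * m + 1) ⇑χ ∧
      ‖τ‖ ≤ K ^ (2 * m + 2) * ‖ψ‖ ∧
      ‖χ‖ ≤ 2 * ((m : ℝ) + 1) ^ 3 * K ^ (4 * m + 2) * ‖ψ‖ := by
  have hodd : Odd (2 * m + 1) := ⟨m, rfl⟩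
  have h1 : ∀ a : Fin (2 * m + 1 + 2) → A, ψ (fun i => a (i - 1)) = ψ a := by
    intro a
    have h := congrFun hcyc a
    have he : (-1 : ℂ) ^ (2 * m + 2) = 1 := Even.neg_one_pow ⟨m + 1, by ring⟩
    simp only [cycT, he, one_mul] at h
    exact h
  have hrot : ∀ c, rotC (p := 2 * m + 1 + 1) c ψ = ψ := by
    intro c
    ext a
    rw [rotC_apply]
    exact cyc_all (p := 2 * m + 1) (⇑ψ) h1 c a
  obtain ⟨χ, τ, hχ, hτ, heq, hn1, hn2⟩ :=
    main_gen hK hbf (q := 2 * m + 1) hodd ψ hrot hcocycle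
  refine ⟨χ, τ, ?_, hτ, heq, hn1, hn2.trans ?_⟩
  · funext a
    have e : (fun i => a (i - 1)) = rotT (Fin.last (2 * m + 1)) a := by
      funext i
      have e2 : (Fin.last (2 * m + 1)) = -1 := by
        rw [eq_neg_iff_add_eq_zero]
        exact Fin.last_add_one _
      rw [rotT, e2, sub_eq_add_neg]
    simp only [cycT]
    rw [e, hχ, Fin.val_last, ← mul_assoc, ← pow_add, Even.neg_one_pow ⟨_, rfl⟩, one_mul]
  · have hp : K ^ (2 * m + 1 + 1) ≤ K ^ (4 * m + 2) := pow_le_pow_right₀ hK (by omega)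
    have hm : (0 : ℝ) ≤ m := Nat.cast_nonneg m
    have hc : (((2 * m + 1 : ℕ) : ℝ) + 1) ^ 2 / 2 ≤ 2 * ((m : ℝ) + 1) ^ 3 := by
      push_cast
      nlinarith [mul_nonneg hm (sq_nonneg ((m : ℝ) + 1))]
    rw [mul_assoc (2 * ((m : ℝ) + 1) ^ 3)]
    have hK0 : 0 ≤ K := by linarith
    exact mul_le_mul hc (mul_le_mul_of_nonneg_right hp (norm_nonneg _))
      (by positivity) (by positivity)
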